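/- Every strongly invertible link in ℝ³ is equivalent, through a smooth family of strongly invertible links, to a strongly invertible Legendrian link. Precisely: for every strongly invertible link L₀ : Fin n × 𝕊¹ → ℝ³ there exists a smooth map H : ℝ × (Fin n × 𝕊¹) → ℝ³ such that H(0,·) = L₀, for every t ∈ [0,1] the map H(t,·) is a strongly invertible link, and H(1,·) is a strongly invertible Legendrian link. -/

import Mathlib

open scoped Manifold

noncomputable section

/-- ℝ³ with coordinates (x, y, z). -/
abbrev R3 : Type := ℝ × ℝ × ℝ

/-- 𝕊¹, the unit circle in ℝ². -/
abbrev S1 : Type := Metric.sphere (0 : EuclideanSpace ℝ (Fin 2)) 1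

/-- The involution τ(x,y,z) = (x, −y, −z). -/
def tau (p : R3) : R3 := (p.1, -p.2.1, -p.2.2)

/-- The contact form of the standard contact structure: α_p(v) = v_z − p_y · v_x;
its kernel at p is the contact plane ξ_st(p). -/
def alphaForm (p v : R3) : ℝ := v.2.2 - p.2.1 * v.1

/-- The x-axis {(x,0,0) : x ∈ ℝ} ⊆ ℝ³, the fixed-point set of τ. -/
def xAxisSet : Set R3 := {p | p.2.1 = 0 ∧ p.2.2 = 0}

/-- An n-component link: a smooth injective immersion `Fin n × 𝕊¹ → ℝ³`
(recorded as a family of maps `𝕊¹ → ℝ³`, jointly injective). -/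
def IsLink {n : ℕ} (L : Fin n → S1 → R3) : Prop :=
  (∀ i, ContMDiff (𝓡 1) 𝓘(ℝ, R3) (⊤ : ℕ∞) (L i)) ∧
  Function.Injective (fun q : Fin n × S1 => L q.1 q.2) ∧
  ∀ i s, Function.Injective (mfderiv (𝓡 1) 𝓘(ℝ, R3) (L i) s)

/-- A link is Legendrian if every tangent vector of every component lies in the kernel of
the contact form at the corresponding point. -/
def IsLegendrianLink {n : ℕ} (L : Fin n → S1 → R3) : Prop :=
  IsLink L ∧
    ∀ i s (v : EuclideanSpace ℝ (Fin 1)),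
      alphaForm (L i s) (mfderiv (𝓡 1) 𝓘(ℝ, R3) (L i) s v) = 0

/-- A link is strongly invertible if τ maps the image of each component onto itself and
that image meets the x-axis in exactly two points. -/
def IsStronglyInvertibleLink {n : ℕ} (L : Fin n → S1 → R3) : Prop :=
  IsLink L ∧
    ∀ i, tau '' Set.range (L i) = Set.range (L i) ∧
      (Set.range (L i) ∩ xAxisSet).encard = 2

/-- A strongly invertible Legendrian link. -/
def IsStronglyInvertibleLegendrianLink {n : ℕ} (L : Fin n → S1 → R3) : Prop :=
  IsStronglyInvertibleLink L ∧ IsLegendrianLink L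

section LegendrianProof

open Real Set Filter Topology MeasureTheory
open scoped ContDiff ComplexConjugate

/-- A `2π`-periodic smooth bump. -/
def bmp (r u : ℝ) : ℝ := Real.smoothTransition (2 - (1 - Real.cos u) / r ^ 2)

lemma bmp_contDiff (r : ℝ) : ContDiff ℝ ∞ (bmp r) := by
  unfold bmp
  exact Real.smoothTransition.contDiff.comp
    (contDiff_const.sub ((contDiff_const.sub Real.contDiff_cos).div_const _))

lemma bmp_periodic (r : ℝ) : Function.Periodic (bmp r) (2 * π) := by
  intro u; simp [bmp]

lemma bmp_nonneg (r u : ℝ) : 0 ≤ bmp r u := Real.smoothTransition.nonneg _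
lemma bmp_le_one (r u : ℝ) : bmp r u ≤ 1 := Real.smoothTransition.le_one _

lemma bmp_eq_one {r u : ℝ} (hr : 0 < r) (hu : |u| ≤ 5 / 4 * r) : bmp r u = 1 := by
  apply Real.smoothTransition.one_of_one_le
  have h1 := Real.one_sub_sq_div_two_le_cos (x := u)
  have h2 : u ^ 2 ≤ (5 / 4 * r) ^ 2 := sq_le_sq.2 (by rwa [abs_of_pos (show 0 < 5 / 4 * r by positivity)])
  have h3 : (1 - Real.cos u) / r ^ 2 ≤ 1 := by
    rw [div_le_one (by positivity)]; nlinarith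
  linarith

lemma bmp_eq_zero {r u : ℝ} (hr : 0 < r) (hu : 2 * r ^ 2 ≤ 1 - Real.cos u) : bmp r u = 0 := by
  apply Real.smoothTransition.zero_of_nonpos
  have h3 : 2 ≤ (1 - Real.cos u) / r ^ 2 := by
    rw [le_div_iff₀ (by positivity)]; exact hu
  linarith

lemma bmp_support {r u : ℝ} (hr : 0 < r) (hu : |u| ≤ π) (h : bmp r u ≠ 0) : |u| ≤ π * r := by
  by_contra hc
  push Not at hc
  apply h
  apply bmp_eq_zero hr
  have h1 := Real.cos_le_one_sub_mul_cos_sq hu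
  have h2 : (π * r) ^ 2 ≤ u ^ 2 := by
    rw [← sq_abs u]
    exact pow_le_pow_left₀ (by positivity) hc.le 2
  have h3 : 2 / π ^ 2 * (π * r) ^ 2 ≤ 2 / π ^ 2 * u ^ 2 :=
    mul_le_mul_of_nonneg_left h2 (by positivity)
  have h4 : 2 / π ^ 2 * (π * r) ^ 2 = 2 * r ^ 2 := by
    have := Real.pi_ne_zero
    field_simp
  linarith

/-- Sard type lemma. -/
lemma sard_finite (f : ℝ → ℝ) (hf : ContDiff ℝ ∞ f) :
    ∀ᵐ l : ℝ, {s | s ∈ Icc 0 (2 * π) ∧ f s - l * Real.sin s = 0}.Finite := by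
  set h : ℝ → ℝ := fun s => f s / Real.sin s with hh
  set S : Set ℝ := {s | Real.sin s ≠ 0 ∧ deriv h s = 0} with hS
  have hfd : Differentiable ℝ f := hf.differentiable (by simp)
  have hdiff : ∀ s, Real.sin s ≠ 0 → DifferentiableAt ℝ h s := fun s hs =>
    (hfd s).div (Real.differentiable_sin s) hs
  have h1 : volume (h '' S) = 0 := by
    apply MeasureTheory.addHaar_image_eq_zero_of_det_fderivWithin_eq_zero (f' := fun _ => (0 : ℝ →L[ℝ] ℝ))
    · intro s hs
      have := (hdiff s hs.1).hasDerivAt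
      rw [hs.2] at this
      have h2 := this.hasFDerivAt
      simp at h2
      exact h2.hasFDerivWithinAt
    · intro s hs
      simp [ContinuousLinearMap.det]
  have h2 : volume (range (fun n : ℤ => deriv f (n * π) / Real.cos (n * π))) = 0 :=
    (countable_range _).measure_zero _
  have h3 := measure_union_null h1 h2
  have h4 : ∀ᵐ l : ℝ, l ∉ h '' S ∪ range (fun n : ℤ => deriv f (n * π) / Real.cos (n * π)) :=
    compl_mem_ae_iff.2 h3
  filter_upwards [h4] with l hl
  simp only [mem_union, not_or] at hl
  obtain ⟨hl1, hl2⟩ := hl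
  have key : ∀ s, f s - l * Real.sin s = 0 → deriv f s - l * Real.cos s ≠ 0 := by
    intro s hs hd
    by_cases hsin : Real.sin s = 0
    · obtain ⟨n, rfl⟩ := Real.sin_eq_zero_iff.1 hsin
      apply hl2
      refine ⟨n, ?_⟩
      have hc : Real.cos (n * π) ≠ 0 := by
        intro hc
        have := Real.sin_sq_add_cos_sq (n * π)
        rw [hsin, hc] at this; norm_num at this
      simp only
      rw [div_eq_iff hc]; linarith
    · apply hl1
      refine ⟨s, ⟨hsin, ?_⟩, ?_⟩
      · have := ((hfd s).hasDerivAt.div (Real.hasDerivAt_sin s) hsin).deriv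
        rw [hh]
        have e : (fun s => f s / Real.sin s) = f / Real.sin := rfl
        rw [e, this, div_eq_zero_iff]; left
        have e1 : f s = l * Real.sin s := by linarith
        have e2 : deriv f s = l * Real.cos s := by linarith
        rw [e1, e2]; ring
      · simp only [hh]; rw [div_eq_iff hsin]; linarith
  by_contra hinf
  obtain ⟨s0, _, hacc⟩ := Set.Infinite.exists_accPt_of_subset_isCompact hinf
    (isCompact_Icc (a := (0:ℝ)) (b := 2 * π)) (fun s hs => hs.1)
  have hk : HasDerivAt (fun s => f s - l * Real.sin s) (deriv f s0 - l * Real.cos s0) s0 :=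
    (hfd s0).hasDerivAt.sub ((Real.hasDerivAt_sin s0).const_mul l)
  rw [accPt_iff_frequently] at hacc
  have hcont : ContinuousAt (fun s => f s - l * Real.sin s) s0 := hk.continuousAt
  have hz : f s0 - l * Real.sin s0 = 0 := by
    by_contra hne
    have := hcont.eventually_ne hne
    obtain ⟨s, hs, hs2⟩ := (hacc.and_eventually this).exists
    exact hs2 hs.2.2
  have hev := hk.eventually_ne (c := 0) (key s0 hz)
  rw [eventually_nhdsWithin_iff] at hev
  obtain ⟨s, hs, hs2⟩ := (hacc.and_eventually hev).exists
  exact hs2 hs.1 hs.2.2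

/-- Oscillatory integrals with finitely many critical points are uniformly small. -/
lemma osc_small (x : ℝ → ℝ) (f : ℝ → ℂ) (hx : ContDiff ℝ ∞ x) (hf : ContDiff ℝ ∞ f)
    (hfin : {s | s ∈ Icc 0 (2 * π) ∧ deriv x s = 0}.Finite) {ε : ℝ} (hε : 0 < ε) :
    ∀ᶠ N : ℝ in atTop, ∀ s ∈ Icc 0 (2 * π),
      ‖∫ u in (0:ℝ)..s, f u * Complex.exp (-(2 * (N * x u) : ℝ) * Complex.I)‖ ≤ ε := by
  have hpi : (0:ℝ) ≤ 2 * π := by positivity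
  have hdx : ContDiff ℝ ∞ (deriv x) := hx.deriv' 
  have hdxc : Continuous (deriv x) := hdx.continuous
  obtain ⟨F, hF⟩ := (isCompact_Icc (a := (0:ℝ)) (b := 2 * π)).exists_bound_of_continuousOn
    hf.continuous.continuousOn
  have hF0 : 0 ≤ F := (norm_nonneg _).trans (hF 0 ⟨le_rfl, hpi⟩)
  -- choose δ
  have hlim : Tendsto (fun δ : ℝ => ∫ u in (0:ℝ)..(2*π), δ / (deriv x u ^ 2 + δ)) (𝓝[>] 0)
      (𝓝 (∫ u in (0:ℝ)..(2*π), (0:ℝ))) := by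
    apply intervalIntegral.tendsto_integral_filter_of_dominated_convergence (fun _ => (1:ℝ))
    · filter_upwards [self_mem_nhdsWithin] with δ hδ
      have : Continuous fun u => δ / (deriv x u ^ 2 + δ) :=
        continuous_const.div (by fun_prop) (fun u => by
          have : (0:ℝ) < δ := hδ
          positivity)
      exact this.aestronglyMeasurable
    · filter_upwards [self_mem_nhdsWithin] with δ hδ
      have hδ' : (0:ℝ) < δ := hδ
      refine ae_of_all _ fun u _ => ?_
      rw [Real.norm_of_nonneg (by positivity), div_le_one (by positivity)]
      nlinarith [sq_nonneg (deriv x u)]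
    · exact intervalIntegrable_const
    · have h0 := hfin.measure_zero volume
      have h0' : ∀ᵐ u : ℝ, u ∉ {s | s ∈ Icc 0 (2 * π) ∧ deriv x s = 0} := compl_mem_ae_iff.2 h0
      filter_upwards [h0'] with u hu hu2
      rw [uIoc_of_le hpi] at hu2
      have hne : deriv x u ≠ 0 := fun h => hu ⟨⟨hu2.1.le, hu2.2⟩, h⟩
      have hc : ContinuousAt (fun δ : ℝ => δ / (deriv x u ^ 2 + δ)) 0 := by
        apply ContinuousAt.div continuousAt_id (by fun_prop)
        simpa using hne
      have := hc.tendsto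
      simp only [zero_div] at this
      exact this.mono_left nhdsWithin_le_nhds
  simp only [intervalIntegral.integral_zero] at hlim
  have hev := (hlim.eventually (gt_mem_nhds (show (0:ℝ) < ε / (2 * (F + 1)) by positivity))).and
    self_mem_nhdsWithin
  obtain ⟨δ, hδ1, hδ2⟩ := hev.exists
  have hδ : (0:ℝ) < δ := hδ2
  set G : ℝ → ℂ := fun u => f u * ((deriv x u / (deriv x u ^ 2 + δ) : ℝ) : ℂ) with hG
  have hpos : ∀ u, deriv x u ^ 2 + δ ≠ 0 := fun u => by positivity
  have hGs : ContDiff ℝ ∞ G := by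
    apply hf.mul
    apply Complex.ofRealCLM.contDiff.comp
    exact hdx.div ((hdx.pow 2).add contDiff_const) hpos
  obtain ⟨G0, hG0⟩ := (isCompact_Icc (a := (0:ℝ)) (b := 2 * π)).exists_bound_of_continuousOn
    hGs.continuous.continuousOn
  have hGd : ContDiff ℝ ∞ (deriv G) := hGs.deriv'
  obtain ⟨G1, hG1⟩ := (isCompact_Icc (a := (0:ℝ)) (b := 2 * π)).exists_bound_of_continuousOn
    hGd.continuous.continuousOn
  have hG00 : 0 ≤ G0 := (norm_nonneg _).trans (hG0 0 ⟨le_rfl, hpi⟩)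
  have hG10 : 0 ≤ G1 := (norm_nonneg _).trans (hG1 0 ⟨le_rfl, hpi⟩)
  filter_upwards [eventually_ge_atTop (2 * (2 * G0 + G1 * (2 * π)) / ε + 1)] with N hN s hs
  have hNpos : 0 < N := lt_of_lt_of_le (by positivity) hN
  set e : ℝ → ℂ := fun u => Complex.exp (-(2 * (N * x u) : ℝ) * Complex.I) with he
  have hen : ∀ u, ‖e u‖ = 1 := fun u => by
    simp only [he]
    rw [show -((2 * (N * x u) : ℝ) : ℂ) * Complex.I = ((-(2 * (N * x u)) : ℝ) : ℂ) * Complex.I by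
      push_cast; ring]
    exact Complex.norm_exp_ofReal_mul_I _
  have hes : ContDiff ℝ ∞ e := by
    apply Complex.contDiff_exp.comp
    apply ContDiff.mul _ contDiff_const
    apply ContDiff.neg
    apply Complex.ofRealCLM.contDiff.comp
    exact contDiff_const.mul (contDiff_const.mul hx)
  have hed : ∀ u, HasDerivAt e (e u * (-(2 * (N * deriv x u) : ℝ) * Complex.I)) u := by
    intro u
    apply HasDerivAt.cexp
    apply HasDerivAt.mul_const
    apply HasDerivAt.neg
    apply HasDerivAt.ofReal_comp
    exact (((hx.differentiable (by simp)) u).hasDerivAt.const_mul N).const_mul 2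
  have hGdd : ∀ u, HasDerivAt G (deriv G u) u := fun u =>
    ((hGs.differentiable (by simp)) u).hasDerivAt
  -- integration by parts
  have hparts := intervalIntegral.integral_mul_deriv_eq_deriv_mul (a := 0) (b := s)
    (fun u _ => hGdd u) (fun u _ => hed u) (hGd.continuous.intervalIntegrable _ _)
    ((hes.continuous.mul (by
      apply Continuous.mul _ continuous_const
      apply Continuous.neg
      apply Complex.continuous_ofReal.comp
      fun_prop)).intervalIntegrable _ _)
  have hb1 : ‖∫ u in (0:ℝ)..s, deriv G u * e u‖ ≤ G1 * (2 * π) := by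
    have := intervalIntegral.norm_integral_le_of_norm_le_const (a := 0) (b := s) (C := G1)
      (f := fun u => deriv G u * e u) (by
        intro u hu
        rw [uIoc_of_le hs.1] at hu
        rw [norm_mul, hen, mul_one]
        exact hG1 u ⟨hu.1.le, hu.2.trans hs.2⟩)
    refine this.trans ?_
    rw [sub_zero, abs_of_nonneg hs.1]
    exact mul_le_mul_of_nonneg_left hs.2 hG10
  have hsplit : (∫ u in (0:ℝ)..s, f u * e u) =
      (∫ u in (0:ℝ)..s, G u * (e u * (-(2 * (N * deriv x u) : ℝ) * Complex.I))) *
        (Complex.I / (2 * N)) + ∫ u in (0:ℝ)..s, f u * e u * ((δ / (deriv x u ^ 2 + δ) : ℝ) : ℂ) := by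
    have hdxc' : Continuous fun u => ((deriv x u : ℝ) : ℂ) := Complex.continuous_ofReal.comp hdxc
    have hec := hes.continuous
    have hGc := hGs.continuous
    have hfc := hf.continuous
    have hdc : Continuous fun u => ((δ / (deriv x u ^ 2 + δ) : ℝ) : ℂ) :=
      Complex.continuous_ofReal.comp (continuous_const.div (by fun_prop) hpos)
    rw [← intervalIntegral.integral_mul_const, ← intervalIntegral.integral_add]
    · apply intervalIntegral.integral_congr
      intro u _
      simp only [hG]
      have h1 : ((deriv x u ^ 2 + δ : ℝ) : ℂ) ≠ 0 := by exact_mod_cast hpos u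
      have h2 : (N : ℂ) ≠ 0 := by exact_mod_cast hNpos.ne'
      push_cast at h1 ⊢
      field_simp
      ring_nf
      simp only [Complex.I_sq]
      ring
    · apply Continuous.intervalIntegrable
      push_cast
      fun_prop
    · apply Continuous.intervalIntegrable
      fun_prop
  have hb2 : ‖∫ u in (0:ℝ)..s, f u * e u * ((δ / (deriv x u ^ 2 + δ) : ℝ) : ℂ)‖ ≤ ε / 2 := by
    have hcd : Continuous fun u => δ / (deriv x u ^ 2 + δ) :=
      (continuous_const.div (by fun_prop) hpos)
    have h1 : ‖∫ u in (0:ℝ)..s, f u * e u * ((δ / (deriv x u ^ 2 + δ) : ℝ) : ℂ)‖ ≤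
        ∫ u in (0:ℝ)..s, F * (δ / (deriv x u ^ 2 + δ)) := by
      apply intervalIntegral.norm_integral_le_of_norm_le hs.1
      · refine ae_of_all _ fun u hu => ?_
        rw [norm_mul, norm_mul, hen, mul_one, Complex.norm_real, Real.norm_of_nonneg (by positivity)]
        exact mul_le_mul_of_nonneg_right (hF u ⟨hu.1.le, hu.2.trans hs.2⟩) (by positivity)
      · exact (continuous_const.mul hcd).intervalIntegrable _ _
    have h2 : ∫ u in (0:ℝ)..s, F * (δ / (deriv x u ^ 2 + δ)) ≤
        ∫ u in (0:ℝ)..(2*π), F * (δ / (deriv x u ^ 2 + δ)) := by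
      apply intervalIntegral.integral_mono_interval le_rfl hs.1 hs.2
      · exact ae_of_all _ fun u => by simp only [Pi.zero_apply]; positivity
      · exact (continuous_const.mul hcd).intervalIntegrable _ _
    refine h1.trans (h2.trans ?_)
    rw [intervalIntegral.integral_const_mul]
    have h3 := mul_le_mul_of_nonneg_left hδ1.le hF0
    refine h3.trans ?_
    rw [mul_div_assoc', div_le_div_iff₀ (by positivity) (by positivity)]
    nlinarith
  have h0m : (0:ℝ) ∈ Icc 0 (2 * π) := ⟨le_rfl, hpi⟩
  change ‖∫ u in (0:ℝ)..s, f u * e u‖ ≤ ε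
  rw [hsplit, hparts]
  refine (norm_add_le _ _).trans ?_
  have hb3 : ‖(G s * e s - G 0 * e 0 - ∫ u in (0:ℝ)..s, deriv G u * e u) * (Complex.I / (2 * N))‖
      ≤ ε / 2 := by
    rw [norm_mul]
    have h1 : ‖G s * e s - G 0 * e 0 - ∫ u in (0:ℝ)..s, deriv G u * e u‖ ≤ 2 * G0 + G1 * (2 * π) := by
      refine (norm_sub_le _ _).trans (add_le_add ((norm_sub_le _ _).trans ?_) hb1)
      rw [norm_mul (G s) (e s), norm_mul (G 0) (e 0), hen, hen]
      have := hG0 s hs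
      have := hG0 0 h0m
      linarith
    have h2 : ‖Complex.I / (2 * (N:ℂ))‖ = 1 / (2 * N) := by
      rw [norm_div, norm_mul, Complex.norm_I, Complex.norm_real, Real.norm_of_nonneg hNpos.le]
      simp
    rw [h2]
    have h3 : 2 * (2 * G0 + G1 * (2 * π)) / ε ≤ N := by linarith
    rw [div_le_iff₀ hε] at h3
    rw [mul_one_div, div_le_iff₀ (by positivity)]
    nlinarith [norm_nonneg (G s * e s - G 0 * e 0 - ∫ u in (0:ℝ)..s, deriv G u * e u)]
  linarith

lemma near_rep (s s' : ℝ) : ∃ k : ℤ, |s - (s' + k * (2 * π))| ≤ π := by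
  refine ⟨round ((s - s') / (2 * π)), ?_⟩
  have h := abs_sub_round ((s - s') / (2 * π))
  have h2 : s - (s' + round ((s - s') / (2 * π)) * (2 * π)) =
      ((s - s') / (2 * π) - round ((s - s') / (2 * π))) * (2 * π) := by
    field_simp
    ring
  rw [h2, abs_mul, abs_of_pos (by positivity : (0:ℝ) < 2 * π)]
  nlinarith [Real.pi_pos]

lemma ico_rep (s : ℝ) : ∃ k : ℤ, s + k * (2 * π) ∈ Ico 0 (2 * π) := by
  obtain ⟨k, hk, _⟩ := existsUnique_add_zsmul_mem_Ico (show (0:ℝ) < 2 * π by positivity) s 0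
  refine ⟨k, ?_⟩
  simpa using hk

lemma per_int {α : Type*} {f : ℝ → α} (h : Function.Periodic f (2 * π)) (s : ℝ) (k : ℤ) :
    f (s + k * (2 * π)) = f s := h.int_mul k s

lemma deriv_periodic {E : Type*} [NormedAddCommGroup E] [NormedSpace ℝ E] {f : ℝ → E} {T : ℝ}
    (h : Function.Periodic f T) : Function.Periodic (deriv f) T := by
  intro s
  rw [← deriv_comp_add_const]
  congr 1
  funext u; exact h u

lemma deriv_even_of_odd {f : ℝ → ℂ} (h : ∀ s, f (-s) = -f s) (s : ℝ) :
    deriv f (-s) = deriv f s := by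
  have h1 := deriv_comp_neg (f := f) (x := s)
  have h2 : (fun s => f (-s)) = fun s => -f s := funext h
  rw [h2, deriv.fun_neg] at h1
  exact (neg_injective h1).symm

lemma deriv_odd_of_even {f : ℝ → ℝ} (h : ∀ s, f (-s) = f s) (s : ℝ) :
    deriv f (-s) = -deriv f s := by
  have h1 := deriv_comp_neg (f := f) (x := s)
  have h2 : (fun s => f (-s)) = fun s => f s := funext h
  rw [h2] at h1
  rw [h1, neg_neg]

/-- Straightening near the critical points. -/
lemma straighten (x : ℝ → ℝ) (w : ℝ → ℂ) (hw : ContDiff ℝ ∞ w)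
    (px : Function.Periodic x (2 * π)) (pw : Function.Periodic w (2 * π))
    (ex : ∀ s, x (-s) = x s) (ow : ∀ s, w (-s) = -w s)
    (himm : ∀ s, deriv x s = 0 → deriv w s ≠ 0)
    (hfin : {s | s ∈ Icc 0 (2 * π) ∧ deriv x s = 0}.Finite) {m : ℝ} (hm : 0 < m) :
    ∃ r : ℝ, 0 < r ∧ r < 1 ∧ ∃ (v : ℝ → ℂ) (κ : ℝ → ℝ), ContDiff ℝ ∞ v ∧ ContDiff ℝ ∞ κ ∧
      Function.Periodic v (2 * π) ∧ Function.Periodic κ (2 * π) ∧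
      (∀ s, v (-s) = -v s) ∧ (∀ s, κ (-s) = κ s) ∧ (∀ s, 0 ≤ κ s) ∧
      (∃ s ∈ Ico 0 (2 * π), 0 < κ s) ∧
      (∀ s, ‖v s - w s‖ ≤ m * r / 8) ∧
      ∀ c, deriv x c = 0 → ∀ s, |s - c| ≤ r →
        0 < (conj (deriv w c) * deriv w s).re ∧ κ s = 0 ∧
        deriv v s = (Real.cos (s - c) : ℂ) * deriv w c := by
  classical
  have hpi := Real.pi_pos
  have pdx := deriv_periodic px
  have pdw := deriv_periodic pw
  have hdw0 : ContDiff ℝ ∞ (deriv w) := hw.deriv'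
  have hdwc : Continuous (deriv w) := hdw0.continuous
  set C : Finset ℝ := hfin.toFinset.filter (· < 2 * π) with hC
  have memC : ∀ a, a ∈ C ↔ a ∈ Ico 0 (2 * π) ∧ deriv x a = 0 := by
    intro a
    simp only [hC, Finset.mem_filter, Set.Finite.mem_toFinset, mem_ofPred_eq, mem_Icc, mem_Ico]
    constructor
    · rintro ⟨⟨⟨h1, h2⟩, h3⟩, h4⟩; exact ⟨⟨h1, h4⟩, h3⟩
    · rintro ⟨⟨h1, h4⟩, h3⟩; exact ⟨⟨⟨h1, h4.le⟩, h3⟩, h4⟩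
  obtain ⟨s0, hs0, hs0C⟩ : ∃ s ∈ Ico 0 (2 * π), s ∉ C := by
    have : (Ico (0:ℝ) (2 * π)).Infinite := Ico_infinite (by positivity)
    obtain ⟨s, hs, hs'⟩ := this.exists_notMem_finset C
    exact ⟨s, hs, hs'⟩
  have cospos : ∀ a ∈ Ico 0 (2 * π), ∀ b ∈ Ico 0 (2 * π), a ≠ b → 0 < 1 - Real.cos (a - b) := by
    intro a ha b hb hab
    have h1 : Real.cos (a - b) ≠ 1 := by
      intro h
      rw [Real.cos_eq_one_iff_of_lt_of_lt (by linarith [ha.1, hb.2]) (by linarith [ha.2, hb.1])] at h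
      exact hab (sub_eq_zero.1 h)
    have := lt_of_le_of_ne (Real.cos_le_one (a - b)) h1
    linarith
  set ε : ℝ := m / (8 * π * (C.card + 1)) with hε
  have hεpos : 0 < ε := by positivity
  -- small r
  have ev1 : ∀ᶠ r in 𝓝[>] (0:ℝ), 0 < r := self_mem_nhdsWithin
  have ev2 : ∀ᶠ r in 𝓝[>] (0:ℝ), r < 1 :=
    nhdsWithin_le_nhds (gt_mem_nhds one_pos)
  have small : ∀ d : ℝ, 0 < d → ∀ᶠ r in 𝓝[>] (0:ℝ), 2 * r + 2 * r ^ 2 < d := by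
    intro d hd
    have : Tendsto (fun r : ℝ => 2 * r + 2 * r ^ 2) (𝓝 0) (𝓝 (2 * 0 + 2 * 0 ^ 2)) :=
      (Continuous.tendsto (by fun_prop) _)
    simp only [mul_zero, ne_eq, OfNat.ofNat_ne_zero, not_false_eq_true, zero_pow, add_zero] at this
    exact nhdsWithin_le_nhds (this.eventually (gt_mem_nhds hd))
  have scale : ∀ (a K : ℝ) (P : ℝ → Prop), 0 < K → (∀ᶠ s in 𝓝 a, P s) →
      ∀ᶠ r in 𝓝[>] (0:ℝ), ∀ s, |s - a| ≤ K * r → P s := by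
    intro a K P hK h
    obtain ⟨d, hd, h⟩ := Metric.eventually_nhds_iff.1 h
    filter_upwards [nhdsWithin_le_nhds (gt_mem_nhds (show (0:ℝ) < d / K by positivity))] with r hr s hs
    apply h
    rw [Real.dist_eq]
    rw [lt_div_iff₀ hK] at hr
    linarith [mul_comm K r]
  have ev3 : ∀ᶠ r in 𝓝[>] (0:ℝ), ∀ a ∈ C, ∀ s, |s - a| ≤ π * r →
      ‖w a + (Real.sin (s - a) : ℂ) * deriv w a - w s‖ ≤ ε * |s - a| := by
    rw [Filter.eventually_all_finset]
    intro a ha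
    apply scale _ _ _ hpi
    have hd : HasDerivAt (fun s => w a + (Real.sin (s - a) : ℂ) * deriv w a - w s)
        0 a := by
      have h1 : HasDerivAt (fun s : ℝ => (Real.sin (s - a) : ℂ)) ((Real.cos (a - a) * 1 : ℝ) : ℂ) a :=
        (((hasDerivAt_id a).sub_const a).sin).ofReal_comp
      have h2 := ((h1.mul_const (deriv w a)).const_add (w a)).sub
        ((hw.differentiable (by simp)) a).hasDerivAt
      have h3 : ((Real.cos (a - a) * 1 : ℝ) : ℂ) * deriv w a - deriv w a = 0 := by simp
      rw [h3] at h2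
      exact h2
    have := (hasDerivAt_iff_isLittleO.1 hd).def hεpos
    filter_upwards [this] with s hs
    simpa using hs
  have ev4 : ∀ᶠ r in 𝓝[>] (0:ℝ), ∀ a ∈ C, ∀ b ∈ C, a ≠ b → 2 * r + 2 * r ^ 2 < 1 - Real.cos (a - b) := by
    rw [Filter.eventually_all_finset]
    intro a ha
    rw [Filter.eventually_all_finset]
    intro b hb
    by_cases hab : a = b
    · exact Eventually.of_forall fun _ h => absurd hab h
    · filter_upwards [small _ (cospos a ((memC a).1 ha).1 b ((memC b).1 hb).1 hab)] with r hr _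
      exact hr
  have ev5 : ∀ᶠ r in 𝓝[>] (0:ℝ), ∀ a ∈ C, 2 * r + 2 * r ^ 2 < 1 - Real.cos (s0 - a) := by
    rw [Filter.eventually_all_finset]
    intro a ha
    exact small _ (cospos s0 hs0 a ((memC a).1 ha).1 (fun h => hs0C (h ▸ ha)))
  have ev6 : ∀ᶠ r in 𝓝[>] (0:ℝ), ∀ a ∈ C, ∀ s, |s - a| ≤ 1 * r →
      0 < (conj (deriv w a) * deriv w s).re := by
    rw [Filter.eventually_all_finset]
    intro a ha
    apply scale _ _ _ one_pos
    have hc : Continuous fun s => (conj (deriv w a) * deriv w s).re := by fun_prop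
    apply hc.continuousAt.eventually (lt_mem_nhds _)
    have h0 := himm a ((memC a).1 ha).2
    change 0 < (conj (deriv w a) * deriv w a).re
    rw [mul_comm, Complex.mul_conj, Complex.ofReal_re]
    exact Complex.normSq_pos.2 h0
  obtain ⟨r, hr0, hr1, hr3, hr4, hr5, hr6⟩ :=
    (ev1.and (ev2.and (ev3.and (ev4.and (ev5.and ev6))))).exists
  set v0 : ℝ → ℂ := fun s => w s + ∑ a ∈ C, ((bmp r (s - a) : ℝ) : ℂ) *
    (w a + (Real.sin (s - a) : ℂ) * deriv w a - w s) with hv0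
  set κ0 : ℝ → ℝ := fun s => ∏ a ∈ C, (1 - bmp r (s - a)) with hκ0
  have hbs : ∀ a, ContDiff ℝ ∞ fun s => bmp r (s - a) := fun a =>
    (bmp_contDiff r).comp (contDiff_id.sub contDiff_const)
  have hv0s : ContDiff ℝ ∞ v0 := by
    apply hw.add
    apply ContDiff.sum
    intro a _
    apply ContDiff.mul
    · exact Complex.ofRealCLM.contDiff.comp (hbs a)
    · apply ContDiff.sub _ hw
      apply contDiff_const.add
      apply ContDiff.mul _ contDiff_const
      exact Complex.ofRealCLM.contDiff.comp (Real.contDiff_sin.comp (contDiff_id.sub contDiff_const))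
  have hκ0s : ContDiff ℝ ∞ κ0 := by
    apply contDiff_prod
    intro a _
    exact contDiff_const.sub (hbs a)
  have pv0 : Function.Periodic v0 (2 * π) := by
    intro s
    simp only [hv0]
    rw [pw s]
    congr 1
    apply Finset.sum_congr rfl
    intro a _
    rw [show s + 2 * π - a = (s - a) + 2 * π by ring, bmp_periodic r, Real.sin_add_two_pi]
  have pκ0 : Function.Periodic κ0 (2 * π) := by
    intro s
    simp only [hκ0]
    apply Finset.prod_congr rfl
    intro a _
    rw [show s + 2 * π - a = (s - a) + 2 * π by ring, bmp_periodic r]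
  have hκ0n : ∀ s, 0 ≤ κ0 s := fun s => Finset.prod_nonneg fun a _ => by
    linarith [bmp_le_one r (s - a)]
  have locC : ∀ a ∈ C, ∀ s, |s - a| < 5 / 4 * r →
      v0 s = w a + (Real.sin (s - a) : ℂ) * deriv w a ∧ κ0 s = 0 := by
    intro a ha s hs
    have hb1 : bmp r (s - a) = 1 := bmp_eq_one hr0 hs.le
    constructor
    · simp only [hv0]
      rw [Finset.sum_eq_single a]
      · rw [hb1]; push_cast; ring
      · intro b hb hba
        have h1 := hr4 a ha b hb (Ne.symm hba)
        have h2 : bmp r (s - b) = 0 := by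
          apply bmp_eq_zero hr0
          have h3 : |Real.cos (s - b) - Real.cos (a - b)| ≤ |(s - b) - (a - b)| :=
            Real.abs_cos_sub_cos_le _ _
          have h4 := (abs_le.1 h3).2
          have h5 : |(s - b) - (a - b)| = |s - a| := by congr 1; ring
          rw [h5] at h4
          linarith
        rw [h2]; simp
      · intro h; exact absurd ha h
    · simp only [hκ0]
      apply Finset.prod_eq_zero ha
      rw [hb1]; ring
  have locc : ∀ c, deriv x c = 0 → ∀ s, |s - c| < 5 / 4 * r →
      v0 s = w c + (Real.sin (s - c) : ℂ) * deriv w c ∧ κ0 s = 0 := by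
    intro c hc s hs
    obtain ⟨k, hk⟩ := ico_rep c
    have ha : c + k * (2 * π) ∈ C := (memC _).2 ⟨hk, by rw [per_int pdx]; exact hc⟩
    have := locC _ ha (s + k * (2 * π)) (by
      rw [show s + k * (2 * π) - (c + k * (2 * π)) = s - c by ring]; exact hs)
    rw [per_int pv0, per_int pκ0, per_int pw, per_int pdw,
      show s + k * (2 * π) - (c + k * (2 * π)) = s - c by ring] at this
    exact this
  have bound0 : ∀ s, ‖v0 s - w s‖ ≤ m * r / 8 := by
    intro s
    simp only [hv0, add_sub_cancel_left]
    have h1 : ∀ a ∈ C, ‖((bmp r (s - a) : ℝ) : ℂ) * (w a + (Real.sin (s - a) : ℂ) * deriv w a - w s)‖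
        ≤ ε * (π * r) := by
      intro a ha
      by_cases hb : bmp r (s - a) = 0
      · rw [hb]; simp; positivity
      · obtain ⟨k, hk⟩ := near_rep a s
        have e1 : |s + k * (2 * π) - a| ≤ π := by rw [abs_sub_comm]; exact hk
        have e2 : bmp r (s + k * (2 * π) - a) = bmp r (s - a) := by
          rw [show s + k * (2 * π) - a = (s - a) + k * (2 * π) by ring, per_int (bmp_periodic r)]
        have e3 : |s + k * (2 * π) - a| ≤ π * r := bmp_support hr0 e1 (by rwa [e2])
        have e4 := hr3 a ha _ e3
        rw [per_int pw, show s + k * (2 * π) - a = (s - a) + k * (2 * π) by ring,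
          per_int Real.sin_periodic] at e4
        rw [norm_mul, Complex.norm_real, Real.norm_of_nonneg (bmp_nonneg _ _)]
        rw [show s + k * (2 * π) - a = (s - a) + k * (2 * π) by ring] at e3
        calc _ ≤ 1 * (ε * (π * r)) := by
              apply mul_le_mul (bmp_le_one _ _) (e4.trans _) (norm_nonneg _) zero_le_one
              exact mul_le_mul_of_nonneg_left e3 hεpos.le
          _ = _ := one_mul _
    refine (norm_sum_le_of_le C h1).trans ?_
    rw [Finset.sum_const, nsmul_eq_mul, hε]
    have hcc : (C.card : ℝ) * (m / (8 * π * (C.card + 1)) * (π * r)) =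
        (m * r / 8) * (C.card / (C.card + 1)) := by
      field_simp
    rw [hcc]
    have : (C.card : ℝ) / (C.card + 1) ≤ 1 := by
      rw [div_le_one (by positivity)]; linarith
    exact mul_le_of_le_one_right (by positivity) this
  refine ⟨r, hr0, hr1, fun s => (v0 s - v0 (-s)) / 2, fun s => κ0 s + κ0 (-s), ?_, ?_, ?_, ?_, ?_, ?_,
    ?_, ?_, ?_, ?_⟩
  · exact (hv0s.sub (hv0s.comp contDiff_neg)).div_const _
  · exact hκ0s.add (hκ0s.comp contDiff_neg)
  · intro s
    simp only
    rw [pv0 s, show -(s + 2 * π) = -s - 2 * π by ring, pv0.sub_eq]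
  · intro s
    simp only
    rw [pκ0 s, show -(s + 2 * π) = -s - 2 * π by ring, pκ0.sub_eq]
  · intro s; simp only [neg_neg]; ring
  · intro s; simp only [neg_neg]; ring
  · intro s; exact add_nonneg (hκ0n _) (hκ0n _)
  · refine ⟨s0, hs0, ?_⟩
    have : κ0 s0 = 1 := by
      simp only [hκ0]
      apply Finset.prod_eq_one
      intro a ha
      rw [bmp_eq_zero hr0 (by linarith [hr5 a ha])]; ring
    simp only
    rw [this]; linarith [hκ0n (-s0)]
  · intro s
    have e : (v0 s - v0 (-s)) / 2 - w s = ((v0 s - w s) - (v0 (-s) - w (-s))) / 2 := by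
      rw [ow]; ring
    simp only
    rw [e, norm_div]
    have := norm_sub_le (v0 s - w s) (v0 (-s) - w (-s))
    have := bound0 s
    have := bound0 (-s)
    rw [Complex.norm_ofNat, div_le_iff₀ two_pos]
    linarith
  · intro c hc s hs
    have hc' : deriv x (-c) = 0 := by rw [deriv_odd_of_even ex, hc, neg_zero]
    have hvs : ∀ u, |u - c| < 5 / 4 * r →
        (v0 u - v0 (-u)) / 2 = w c + (Real.sin (u - c) : ℂ) * deriv w c := by
      intro u hu
      rw [(locc c hc u hu).1, (locc (-c) hc' (-u) (by
        rw [show -u - -c = -(u - c) by ring, abs_neg]; exact hu)).1, ow, deriv_even_of_odd ow,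
        show -u - -c = -(u - c) by ring, Real.sin_neg]
      push_cast
      ring
    have hlt : |s - c| < 5 / 4 * r := by linarith
    refine ⟨?_, ?_, ?_⟩
    · obtain ⟨k, hk⟩ := ico_rep c
      have ha : c + k * (2 * π) ∈ C := (memC _).2 ⟨hk, by rw [per_int pdx]; exact hc⟩
      have := hr6 _ ha (s + k * (2 * π)) (by
        rw [show s + k * (2 * π) - (c + k * (2 * π)) = s - c by ring, one_mul]; exact hs)
      rwa [per_int pdw, per_int pdw] at this
    · simp only
      rw [(locc c hc s hlt).2, (locc (-c) hc' (-s) (by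
        rw [show -s - -c = -(s - c) by ring, abs_neg]; exact hlt)).2, add_zero]
    · have hev : (fun u => (v0 u - v0 (-u)) / 2) =ᶠ[𝓝 s]
          fun u => w c + (Real.sin (u - c) : ℂ) * deriv w c := by
        have hcont : Continuous fun u : ℝ => |u - c| := by fun_prop
        filter_upwards [hcont.continuousAt.eventually (gt_mem_nhds hlt)] with u hu
        exact hvs u hu
      rw [hev.deriv_eq]
      have h1 : HasDerivAt (fun u : ℝ => (Real.sin (u - c) : ℂ)) ((Real.cos (s - c) * 1 : ℝ) : ℂ) s :=
        (((hasDerivAt_id s).sub_const c).sin).ofReal_comp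
      have h2 := ((h1.mul_const (deriv w c)).const_add (w c)).deriv
      rw [h2, mul_one]

def BL {n : ℕ} (g : Fin n → ℝ → ℝ × ℂ) (m : ℝ) : Prop :=
  (∀ i s s', |s - s'| ≤ π → m * |s - s'| ≤ ‖g i s - g i s'‖) ∧
  ∀ i k, i ≠ k → ∀ s s', m ≤ ‖g i s - g k s'‖

lemma exists_pos_le {ι : Type*} [Finite ι] (f : ι → ℝ) (h : ∀ i, 0 < f i) :
    ∃ m > 0, ∀ i, m ≤ f i := by
  have h1 : ∀ᶠ m in 𝓝[>] (0:ℝ), ∀ i, m ≤ f i := by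
    rw [Filter.eventually_all]
    intro i
    filter_upwards [nhdsWithin_le_nhds (gt_mem_nhds (h i))] with m hm using hm.le
  have h2 : ∀ᶠ m in 𝓝[>] (0:ℝ), 0 < m := self_mem_nhdsWithin
  obtain ⟨m, a, b⟩ := (h2.and h1).exists
  exact ⟨m, a, b⟩

lemma per_eq_zero_of_lt {j : ℤ} (h : |(j:ℝ) * (2 * π)| < 2 * π) : j = 0 := by
  have hpi := Real.pi_pos
  rw [abs_mul, abs_of_pos (by positivity : 0 < 2 * π)] at h
  have h1 : |(j:ℝ)| < 1 := by
    by_contra hc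
    push Not at hc
    nlinarith
  exact Int.abs_lt_one_iff.1 (by exact_mod_cast h1)

lemma BL_one (g : ℝ → ℝ × ℂ) (hg : ContDiff ℝ ∞ g) (pg : Function.Periodic g (2 * π))
    (inj : ∀ s s', g s = g s' → ∃ j : ℤ, s = s' + j * (2 * π))
    (imm : ∀ s, deriv g s ≠ 0) :
    ∃ m > 0, ∀ s s', |s - s'| ≤ π → m * |s - s'| ≤ ‖g s - g s'‖ := by
  have hpi := Real.pi_pos
  set K : Set (ℝ × ℝ) := (Icc 0 (2 * π) ×ˢ Icc (-π) (3 * π)) ∩ {p | |p.1 - p.2| ≤ π} with hK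
  have hKc : IsCompact K := by
    apply (isCompact_Icc.prod isCompact_Icc).inter_right
    exact isClosed_le (by fun_prop) (by fun_prop)
  have key : ∃ m > 0, ∀ q ∈ K, m * |q.1 - q.2| ≤ ‖g q.1 - g q.2‖ := by
    refine hKc.induction_on (p := fun s => ∃ m > 0, ∀ q ∈ s, m * |q.1 - q.2| ≤ ‖g q.1 - g q.2‖)
      ⟨1, one_pos, by simp⟩ ?_ ?_ ?_
    · rintro s t hst ⟨m, hm, h⟩
      exact ⟨m, hm, fun q hq => h q (hst hq)⟩
    · rintro s t ⟨m, hm, h⟩ ⟨m', hm', h'⟩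
      refine ⟨min m m', lt_min hm hm', ?_⟩
      rintro q (hq | hq)
      · exact (mul_le_mul_of_nonneg_right (min_le_left _ _) (abs_nonneg _)).trans (h q hq)
      · exact (mul_le_mul_of_nonneg_right (min_le_right _ _) (abs_nonneg _)).trans (h' q hq)
    · rintro ⟨a, b⟩ ⟨_, hab⟩
      change |a - b| ≤ π at hab
      suffices ∃ m > 0, ∀ᶠ q : ℝ × ℝ in 𝓝 (a, b), m * |q.1 - q.2| ≤ ‖g q.1 - g q.2‖ by
        obtain ⟨m, hm, h⟩ := this
        exact ⟨_, nhdsWithin_le_nhds h, m, hm, fun q hq => hq⟩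
      by_cases hne : a = b
      · subst hne
        have hd : HasStrictDerivAt g (deriv g a) a :=
          (hg.contDiffAt).hasStrictDerivAt (by simp)
        have hpos : 0 < ‖deriv g a‖ := norm_pos_iff.2 (imm a)
        refine ⟨‖deriv g a‖ / 2, by positivity, ?_⟩
        have h1 := hd.hasStrictFDerivAt.isLittleO.def (half_pos hpos)
        filter_upwards [h1] with q hq
        simp only [ContinuousLinearMap.toSpanSingleton_apply] at hq
        have h2 := norm_sub_norm_le ((q.1 - q.2) • deriv g a) (g q.1 - g q.2)
        rw [norm_sub_rev ((q.1 - q.2) • deriv g a)] at h2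
        rw [norm_smul] at h2
        simp only [Real.norm_eq_abs] at h2 hq
        linarith [mul_comm ‖deriv g a‖ |q.1 - q.2|]
      · have h1 : g a ≠ g b := by
          intro h
          obtain ⟨j, hj⟩ := inj _ _ h
          have : j = 0 := by
            apply per_eq_zero_of_lt
            rw [hj] at hab
            simp only [add_sub_cancel_left] at hab
            linarith
          subst this
          simp at hj
          exact hne hj
        have hpos : 0 < ‖g a - g b‖ := norm_pos_iff.2 (sub_ne_zero.2 h1)
        refine ⟨‖g a - g b‖ / 8, by positivity, ?_⟩
        have hgc := hg.continuous
        have e1 : ∀ᶠ q : ℝ × ℝ in 𝓝 (a, b), ‖g a - g b‖ / 2 < ‖g q.1 - g q.2‖ := by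
          have : Continuous fun q : ℝ × ℝ => ‖g q.1 - g q.2‖ := by fun_prop
          exact this.continuousAt.eventually (lt_mem_nhds (by simpa using hpos))
        have e2 : ∀ᶠ q : ℝ × ℝ in 𝓝 (a, b), |q.1 - q.2| < 4 := by
          have : Continuous fun q : ℝ × ℝ => |q.1 - q.2| := by fun_prop
          exact this.continuousAt.eventually (gt_mem_nhds (by
            change |a - b| < 4
            linarith [Real.pi_lt_four]))
        filter_upwards [e1, e2] with q h1 h2
        nlinarith
  obtain ⟨m, hm, h⟩ := key
  refine ⟨m, hm, fun s s' hs => ?_⟩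
  obtain ⟨k, hk⟩ := ico_rep s
  have := h (s + k * (2 * π), s' + k * (2 * π)) ?_
  · simpa [per_int pg] using this
  · have h3 : (s + k * (2 * π)) - (s' + k * (2 * π)) = s - s' := by ring
    refine ⟨⟨⟨hk.1, hk.2.le⟩, ?_, ?_⟩, ?_⟩
    · change -π ≤ s' + k * (2 * π)
      linarith [(abs_le.1 hs).2, hk.1]
    · change s' + k * (2 * π) ≤ 3 * π
      linarith [(abs_le.1 hs).1, hk.2]
    · change |(s + k * (2 * π)) - (s' + k * (2 * π))| ≤ π
      rwa [h3]

lemma BL_exists {n : ℕ} (g : Fin n → ℝ → ℝ × ℂ) (hg : ∀ i, ContDiff ℝ ∞ (g i))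
    (pg : ∀ i, Function.Periodic (g i) (2 * π))
    (inj : ∀ i k s s', g i s = g k s' → i = k ∧ ∃ j : ℤ, s = s' + j * (2 * π))
    (imm : ∀ i s, deriv (g i) s ≠ 0) : ∃ m > 0, BL g m := by
  have hpi := Real.pi_pos
  have h1 : ∀ i, ∃ m > 0, ∀ s s', |s - s'| ≤ π → m * |s - s'| ≤ ‖g i s - g i s'‖ := fun i =>
    BL_one (g i) (hg i) (pg i) (fun s s' h => (inj i i s s' h).2) (imm i)
  have h2 : ∀ i k, ∃ m > 0, i ≠ k → ∀ s s', m ≤ ‖g i s - g k s'‖ := by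
    intro i k
    by_cases hik : i = k
    · exact ⟨1, one_pos, fun h => absurd hik h⟩
    have hKc : IsCompact (Icc (0:ℝ) (2 * π) ×ˢ Icc (0:ℝ) (2 * π)) := isCompact_Icc.prod isCompact_Icc
    have hci := (hg i).continuous
    have hck := (hg k).continuous
    have hc : Continuous fun q : ℝ × ℝ => ‖g i q.1 - g k q.2‖ := by fun_prop
    obtain ⟨q0, _, hq0⟩ := hKc.exists_isMinOn ⟨(0, 0), by simp [hpi.le]⟩ hc.continuousOn
    refine ⟨‖g i q0.1 - g k q0.2‖, norm_pos_iff.2 (sub_ne_zero.2 fun h => hik (inj _ _ _ _ h).1), ?_⟩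
    intro _ s s'
    obtain ⟨a, ha⟩ := ico_rep s
    obtain ⟨b, hb⟩ := ico_rep s'
    have := hq0 (show ((s + a * (2 * π), s' + b * (2 * π)) : ℝ × ℝ) ∈ _ from
      ⟨⟨ha.1, ha.2.le⟩, ⟨hb.1, hb.2.le⟩⟩)
    simpa [per_int (pg i), per_int (pg k)] using this
  choose f hf hf' using h1
  choose f2 hf2 hf2' using h2
  obtain ⟨a, ha, ha'⟩ := exists_pos_le f hf
  obtain ⟨b, hb, hb'⟩ := exists_pos_le (fun q : Fin n × Fin n => f2 q.1 q.2) (fun q => hf2 _ _)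
  refine ⟨min a b, lt_min ha hb, ?_, ?_⟩
  · intro i s s' h
    refine le_trans (mul_le_mul_of_nonneg_right ?_ (abs_nonneg _)) (hf' i s s' h)
    exact (min_le_left _ _).trans (ha' i)
  · intro i k hik s s'
    exact (min_le_right _ _).trans ((hb' (i, k)).trans (hf2' i k hik s s'))

lemma BL_perturb {n : ℕ} {g g' : Fin n → ℝ → ℝ × ℂ} {m l : ℝ} (h : BL g m)
    (h1 : ∀ i s s', ‖(g' i s - g i s) - (g' i s' - g i s')‖ ≤ l * |s - s'|)
    (h2 : ∀ i s, ‖g' i s - g i s‖ ≤ l) : BL g' (m - 2 * l) := by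
  refine ⟨fun i s s' hs => ?_, fun i k hik s s' => ?_⟩
  · have a := h.1 i s s' hs
    have b := h1 i s s'
    have c : g i s - g i s' = (g' i s - g' i s') - ((g' i s - g i s) - (g' i s' - g i s')) := by abel
    have d := norm_sub_le (g' i s - g' i s') ((g' i s - g i s) - (g' i s' - g i s'))
    rw [← c] at d
    have e : 0 ≤ l * |s - s'| := (norm_nonneg _).trans b
    nlinarith
  · have a := h.2 i k hik s s'
    have b := h2 i s
    have b' := h2 k s'
    have c : g i s - g k s' = (g' i s - g' k s') - ((g' i s - g i s) - (g' k s' - g k s')) := by abel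
    have d := norm_sub_le (g' i s - g' k s') ((g' i s - g i s) - (g' k s' - g k s'))
    rw [← c] at d
    have e := norm_sub_le (g' i s - g i s) (g' k s' - g k s')
    linarith

lemma BL_inj {n : ℕ} {g : Fin n → ℝ → ℝ × ℂ} {m : ℝ} (hm : 0 < m) (h : BL g m)
    (pg : ∀ i, Function.Periodic (g i) (2 * π)) (i k : Fin n) (s s' : ℝ) (e : g i s = g k s') :
    i = k ∧ ∃ j : ℤ, s = s' + j * (2 * π) := by
  have hik : i = k := by
    by_contra hik
    have := h.2 i k hik s s'
    rw [e, sub_self, norm_zero] at this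
    linarith
  refine ⟨hik, ?_⟩
  subst hik
  obtain ⟨j, hj⟩ := near_rep s s'
  refine ⟨j, ?_⟩
  have := h.1 i _ _ hj
  rw [per_int (pg i), e, sub_self, norm_zero] at this
  have h3 : |s - (s' + j * (2 * π))| = 0 := by
    apply le_antisymm _ (abs_nonneg _)
    by_contra hc
    push Not at hc
    nlinarith
  linarith [abs_eq_zero.1 h3]

lemma BL_imm {n : ℕ} {g : Fin n → ℝ → ℝ × ℂ} {m : ℝ} (hm : 0 < m) (h : BL g m)
    (i : Fin n) (s : ℝ) : ¬ HasDerivAt (g i) 0 s := by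
  intro hd
  have h1 := (hasDerivAt_iff_isLittleO.1 hd).def (half_pos hm)
  have h2 : ∀ᶠ u in 𝓝[≠] s, ‖g i u - g i s‖ ≤ m / 2 * |u - s| := by
    filter_upwards [nhdsWithin_le_nhds h1] with u hu
    simpa using hu
  have h3 : ∀ᶠ u in 𝓝[≠] s, u ≠ s := self_mem_nhdsWithin
  have h4 : ∀ᶠ u in 𝓝[≠] s, |u - s| < π := by
    have : Continuous fun u : ℝ => |u - s| := by fun_prop
    exact nhdsWithin_le_nhds (this.continuousAt.eventually (gt_mem_nhds (by simpa using Real.pi_pos)))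
  obtain ⟨u, a, b, c⟩ := (h2.and (h3.and h4)).exists
  have := h.1 i u s c.le
  have h5 : 0 < |u - s| := abs_pos.2 (sub_ne_zero.2 b)
  nlinarith

def uT (θ : ℝ) : ℂ := Complex.exp ((θ : ℂ) * Complex.I)

lemma uT_contDiff : ContDiff ℝ ∞ uT := by
  unfold uT
  exact ((Complex.ofRealCLM.contDiff).mul contDiff_const).cexp

lemma uT_norm (θ : ℝ) : ‖uT θ‖ = 1 := Complex.norm_exp_ofReal_mul_I θ

lemma uT_mul_conj (θ : ℝ) : uT θ * conj (uT θ) = 1 := by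
  rw [Complex.mul_conj, Complex.normSq_eq_norm_sq, uT_norm]; simp

lemma uT_ne (θ : ℝ) : uT θ ≠ 0 := Complex.exp_ne_zero _

lemma conj_uT_sq (N x φ : ℝ) : conj (uT (N * x + φ)) ^ 2 =
    conj (uT φ) ^ 2 * Complex.exp (-(2 * (N * x) : ℝ) * Complex.I) := by
  unfold uT
  rw [← Complex.exp_conj, ← Complex.exp_conj, ← Complex.exp_nat_mul, ← Complex.exp_nat_mul,
    ← Complex.exp_add]
  congr 1
  simp
  ring

lemma solve_mu (a b : ℂ) (ε : ℝ) (ha : ‖a‖ ≤ 1 / 2) (hb : ‖b‖ ≤ ε) :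
    ∃ μ : ℂ, μ + a * conj μ = b ∧ ‖μ‖ ≤ 2 * ε := by
  set d : ℝ := 1 - ‖a‖ ^ 2 with hd
  have hd0 : 3 / 4 ≤ d := by nlinarith [norm_nonneg a]
  have hdc : (d : ℂ) = 1 - a * conj a := by
    rw [Complex.mul_conj, Complex.normSq_eq_norm_sq, hd]; push_cast; ring
  have hdne : (d : ℂ) ≠ 0 := by
    exact_mod_cast (by linarith : d ≠ 0)
  refine ⟨(b - a * conj b) / d, ?_, ?_⟩
  · simp only [map_div₀, map_sub, map_mul, Complex.conj_conj, Complex.conj_ofReal]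
    field_simp
    rw [hdc]; ring
  · rw [norm_div, Complex.norm_real, Real.norm_of_nonneg (by linarith), div_le_iff₀ (by linarith)]
    have h1 := norm_sub_le b (a * conj b)
    rw [norm_mul, Complex.norm_conj] at h1
    nlinarith [norm_nonneg a, norm_nonneg b]

lemma prim_contDiff {G : ℝ → ℂ} (hG : ContDiff ℝ ∞ G) :
    ContDiff ℝ ∞ (fun s => ∫ u in (0:ℝ)..s, G u) ∧
    deriv (fun s => ∫ u in (0:ℝ)..s, G u) = G := by
  have hc := hG.continuous
  have h : ∀ s, HasDerivAt (fun s => ∫ u in (0:ℝ)..s, G u) (G s) s := fun s =>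
    hc.integral_hasStrictDerivAt 0 s |>.hasDerivAt
  have hd : deriv (fun s => ∫ u in (0:ℝ)..s, G u) = G := funext fun s => (h s).deriv
  refine ⟨?_, hd⟩
  rw [contDiff_infty_iff_deriv]
  exact ⟨fun s => (h s).differentiableAt, by rw [hd]; exact hG⟩

lemma lemK (x : ℝ → ℝ) (w : ℝ → ℂ) (hx : ContDiff ℝ ∞ x) (hw : ContDiff ℝ ∞ w)
    (px : Function.Periodic x (2 * π)) (pw : Function.Periodic w (2 * π))
    (ex : ∀ s, x (-s) = x s) (ow : ∀ s, w (-s) = -w s)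
    (himm : ∀ s, deriv x s = 0 → deriv w s ≠ 0)
    (hfin : {s | s ∈ Icc 0 (2 * π) ∧ deriv x s = 0}.Finite) {m : ℝ} (hm : 0 < m) :
    ∃ r : ℝ, 0 < r ∧ r < 1 ∧ ∀ᶠ N : ℝ in atTop, ∀ φ : ℝ, ∃ w1 : ℝ → ℂ,
      ContDiff ℝ ∞ w1 ∧ Function.Periodic w1 (2 * π) ∧ (∀ s, w1 (-s) = -w1 s) ∧
      (∀ s, ‖w1 s - w s‖ ≤ m * r / 4) ∧
      (∀ s, (uT (N * x s + φ) * deriv w1 s).im = 0) ∧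
      ∀ c, deriv x c = 0 → ∀ s, |s - c| ≤ r →
        0 < (conj (deriv w c) * deriv w s).re ∧
        0 ≤ (conj (deriv w c) * deriv w1 s).re ∧
        ((deriv w c * uT (N * x c + φ)).re ≠ 0 → 0 < (conj (deriv w c) * deriv w1 c).re) := by
  have hpi := Real.pi_pos
  obtain ⟨r, hr, hr1, v, κ, hv, hκ, pv, pκ, ov, eκ, κ0, ⟨s0, hs0, κs0⟩, hvw, hc⟩ :=
    straighten x w hw px pw ex ow himm hfin hm
  refine ⟨r, hr, hr1, ?_⟩
  have hdv : ContDiff ℝ ∞ (deriv v) := hv.deriv'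
  have hκC : ContDiff ℝ ∞ (fun s => (κ s : ℂ)) := Complex.ofRealCLM.contDiff.comp hκ
  have hcdv : ContDiff ℝ ∞ (fun s => conj (deriv v s)) :=
    (Complex.conjCLE : ℂ ≃L[ℝ] ℂ).contDiff.comp hdv
  have pdv := deriv_periodic pv
  have edv := deriv_even_of_odd ov
  set J : ℝ := ∫ u in (0:ℝ)..(2 * π), κ u with hJ
  have hJpos : 0 < J := by
    apply intervalIntegral.integral_pos (by positivity) hκ.continuous.continuousOn
      (fun s _ => κ0 s) ⟨s0, ⟨hs0.1, hs0.2.le⟩, κs0⟩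
  set ε : ℝ := min (J / 2) (m * r / 32) with hε
  have hεpos : 0 < ε := lt_min (by positivity) (by positivity)
  filter_upwards [osc_small x _ hx hcdv hfin hεpos, osc_small x _ hx hκC hfin hεpos] with N hN1 hN2 φ
  set e : ℂ := conj (uT φ) ^ 2 with he
  have hen : ‖e‖ = 1 := by rw [he, norm_pow, Complex.norm_conj, uT_norm]; simp
  set E : ℝ → ℂ := fun u => Complex.exp (-(2 * (N * x u) : ℝ) * Complex.I) with hE
  have hTE : ∀ u, conj (uT (N * x u + φ)) ^ 2 = e * E u := fun u => conj_uT_sq _ _ _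
  have hTs : ContDiff ℝ ∞ (fun u => conj (uT (N * x u + φ)) ^ 2) := by
    apply ContDiff.pow
    exact (Complex.conjCLE : ℂ ≃L[ℝ] ℂ).contDiff.comp
      (uT_contDiff.comp ((contDiff_const.mul hx).add contDiff_const))
  have hEc : Continuous E := by
    have := hx.continuous
    simp only [hE]; fun_prop
  have h2pi : (2 * π) ∈ Icc (0:ℝ) (2 * π) := ⟨by positivity, le_rfl⟩
  obtain ⟨μ, hμ, hμn⟩ := solve_mu (e * (∫ u in (0:ℝ)..(2 * π), (κ u : ℂ) * E u) / J)
    (-(e * (∫ u in (0:ℝ)..(2 * π), conj (deriv v u) * E u)) / J) (ε / J)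
    (by
      rw [norm_div, norm_mul, hen, Complex.norm_real, Real.norm_of_nonneg hJpos.le,
        div_le_iff₀ hJpos, one_mul]
      refine (hN2 _ h2pi).trans ((min_le_left _ _).trans (by linarith)))
    (by
      rw [norm_div, norm_neg, norm_mul, hen, Complex.norm_real, Real.norm_of_nonneg hJpos.le, one_mul]
      exact div_le_div_of_nonneg_right (hN1 _ h2pi) hJpos.le)
  set G : ℝ → ℂ := fun u => (deriv v u + μ * κ u) +
    conj (deriv v u + μ * κ u) * conj (uT (N * x u + φ)) ^ 2 with hG
  have hGs : ContDiff ℝ ∞ G := by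
    have h1 : ContDiff ℝ ∞ fun u => deriv v u + μ * κ u := hdv.add (contDiff_const.mul hκC)
    exact h1.add (((Complex.conjCLE : ℂ ≃L[ℝ] ℂ).contDiff.comp h1).mul hTs)
  have hGp : Function.Periodic G (2 * π) := fun u => by
    simp only [hG, pdv u, pκ u, px u]
  have hGe : ∀ u, G (-u) = G u := fun u => by
    simp only [hG, edv u, eκ u, ex u]
  obtain ⟨hw1, hdw1⟩ := prim_contDiff hGs
  have hform : ∀ s, (∫ u in (0:ℝ)..s, G u) = v s + μ * ((∫ u in (0:ℝ)..s, κ u : ℝ) : ℂ) +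
      e * (∫ u in (0:ℝ)..s, conj (deriv v u) * E u) +
      conj μ * (e * ∫ u in (0:ℝ)..s, (κ u : ℂ) * E u) := by
    intro s
    have v0 : v 0 = 0 := by
      have := ov 0
      rw [neg_zero] at this
      exact self_eq_neg.1 this
    have i1 : v s = ∫ u in (0:ℝ)..s, deriv v u := by
      rw [intervalIntegral.integral_deriv_eq_sub' v rfl
        (fun u _ => hv.differentiable (by simp) u) hdv.continuous.continuousOn, v0, sub_zero]
    have c1 := hdv.continuous
    have c2 := hκC.continuous
    have c3 := hcdv.continuous
    rw [i1, ← intervalIntegral.integral_ofReal, ← intervalIntegral.integral_const_mul,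
      ← intervalIntegral.integral_const_mul, ← intervalIntegral.integral_const_mul,
      ← intervalIntegral.integral_const_mul,
      ← intervalIntegral.integral_add, ← intervalIntegral.integral_add,
      ← intervalIntegral.integral_add]
    · congr 1
      funext u
      simp only [hG, hTE, map_add, map_mul, Complex.conj_ofReal]
      ring
    all_goals
      apply Continuous.intervalIntegrable
      fun_prop
  have hzero : (∫ u in (0:ℝ)..(2 * π), G u) = 0 := by
    have v2 : v (2 * π) = 0 := by
      have h1 := ov 0
      have h2 := pv 0
      rw [neg_zero] at h1
      rw [zero_add] at h2
      rw [h2]; exact self_eq_neg.1 h1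
    rw [hform, v2, ← hJ]
    have hJc : (J : ℂ) ≠ 0 := by exact_mod_cast hJpos.ne'
    field_simp at hμ
    linear_combination hμ
  have hw1p : Function.Periodic (fun s => ∫ u in (0:ℝ)..s, G u) (2 * π) := by
    intro s
    have i : ∀ a b, IntervalIntegrable G volume a b := fun a b => hGs.continuous.intervalIntegrable _ _
    have h1 := hGp.intervalIntegral_add_eq s 0
    rw [zero_add, hzero] at h1
    change (∫ u in (0:ℝ)..(s + 2 * π), G u) = ∫ u in (0:ℝ)..s, G u
    rw [← intervalIntegral.integral_add_adjacent_intervals (i 0 s) (i s _), h1, add_zero]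
  refine ⟨fun s => ∫ u in (0:ℝ)..s, G u, hw1, hw1p, ?_, ?_, ?_, ?_⟩
  · intro s
    have h1 := intervalIntegral.integral_comp_neg (a := 0) (b := s) G
    simp only [hGe, neg_zero] at h1
    change (∫ u in (0:ℝ)..(-s), G u) = -∫ u in (0:ℝ)..s, G u
    rw [h1, intervalIntegral.integral_symm]
  · have main : ∀ s ∈ Icc 0 (2 * π), ‖(∫ u in (0:ℝ)..s, G u) - w s‖ ≤ m * r / 4 := by
      intro s hs
      have hK0 : 0 ≤ ∫ u in (0:ℝ)..s, κ u := intervalIntegral.integral_nonneg hs.1 (fun u _ => κ0 u)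
      have hKJ : (∫ u in (0:ℝ)..s, κ u) ≤ J :=
        intervalIntegral.integral_mono_interval le_rfl hs.1 hs.2
          (Eventually.of_forall fun u => κ0 u) (hκ.continuous.intervalIntegrable _ _)
      have b1 : ‖μ * ((∫ u in (0:ℝ)..s, κ u : ℝ) : ℂ)‖ ≤ 2 * ε := by
        rw [norm_mul, Complex.norm_real, Real.norm_of_nonneg hK0]
        calc _ ≤ (2 * (ε / J)) * J := mul_le_mul hμn hKJ hK0 (by positivity)
          _ = 2 * ε := by field_simp
      have b2 : ‖e * (∫ u in (0:ℝ)..s, conj (deriv v u) * E u)‖ ≤ ε := by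
        rw [norm_mul, hen, one_mul]; exact hN1 s hs
      have b3 : ‖conj μ * (e * ∫ u in (0:ℝ)..s, (κ u : ℂ) * E u)‖ ≤ ε := by
        rw [norm_mul, norm_mul, hen, one_mul, Complex.norm_conj]
        calc _ ≤ 1 * ε := by
              apply mul_le_mul _ (hN2 s hs) (norm_nonneg _) zero_le_one
              refine hμn.trans ?_
              rw [← mul_div_assoc, div_le_one hJpos]
              linarith [min_le_left (J / 2) (m * r / 32)]
          _ = ε := one_mul _
      have b4 := hvw s
      have b5 : ε ≤ m * r / 32 := min_le_right _ _
      rw [hform]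
      have : v s + μ * ((∫ u in (0:ℝ)..s, κ u : ℝ) : ℂ) +
        e * (∫ u in (0:ℝ)..s, conj (deriv v u) * E u) +
        conj μ * (e * ∫ u in (0:ℝ)..s, (κ u : ℂ) * E u) - w s = (v s - w s) +
        μ * ((∫ u in (0:ℝ)..s, κ u : ℝ) : ℂ) +
        e * (∫ u in (0:ℝ)..s, conj (deriv v u) * E u) +
        conj μ * (e * ∫ u in (0:ℝ)..s, (κ u : ℂ) * E u) := by ring
      rw [this]
      refine (norm_add₃_le.trans (add_le_add_left (add_le_add_left (norm_add_le _ _) _) _)).trans ?_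
      linarith
    intro s
    obtain ⟨k, hk⟩ := ico_rep s
    have h1 := main _ ⟨hk.1, hk.2.le⟩
    rw [per_int pw, per_int hw1p] at h1
    exact h1
  · intro s
    rw [hdw1]
    have h1 := uT_mul_conj (N * x s + φ)
    have : uT (N * x s + φ) * G s = uT (N * x s + φ) * (deriv v s + μ * κ s) +
        conj (uT (N * x s + φ) * (deriv v s + μ * κ s)) := by
      simp only [hG, map_mul]
      linear_combination (conj (deriv v s + μ * κ s) * conj (uT (N * x s + φ))) * h1
    rw [this, Complex.add_conj, Complex.ofReal_im]
  · intro c hcc s hs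
    obtain ⟨p1, p2, p3⟩ := hc c hcc s hs
    have gen : ∀ s, |s - c| ≤ r → (conj (deriv w c) * G s).re =
        Real.cos (s - c) * (2 * (deriv w c * uT (N * x s + φ)).re ^ 2) := by
      intro s hs
      obtain ⟨p1, p2, p3⟩ := hc c hcc s hs
      have h1 := uT_mul_conj (N * x s + φ)
      have hn : (uT (N * x s + φ)).re ^ 2 + (uT (N * x s + φ)).im ^ 2 = 1 := by
        have := congrArg Complex.re h1
        simp at this
        linarith
      have : conj (deriv w c) * G s = (Real.cos (s - c) : ℂ) * (deriv w c * conj (deriv w c) +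
          conj (deriv w c * uT (N * x s + φ)) ^ 2) := by
        simp only [hG, p2, p3, map_mul, map_add, Complex.conj_ofReal]
        simp
        ring
      rw [this, Complex.re_ofReal_mul]
      congr 1
      simp [pow_two]
      linear_combination (-((deriv w c).re ^ 2 + (deriv w c).im ^ 2)) * hn
    have hcos : 0 < Real.cos (s - c) := by
      apply Real.cos_pos_of_mem_Ioo
      have := abs_le.1 hs
      have := Real.pi_gt_three
      constructor <;> linarith
    rw [hdw1]
    refine ⟨p1, ?_, ?_⟩
    · rw [gen s hs]; positivity
    · intro h
      rw [gen c (by simpa using hr.le)]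
      simp only [sub_self, Real.cos_zero, one_mul]
      positivity

def Good {n : ℕ} (x : Fin n → ℝ → ℝ) (w : Fin n → ℝ → ℂ) : Prop :=
  (∀ i k s s', x i s = x k s' → w i s = w k s' → i = k ∧ ∃ j : ℤ, s = s' + j * (2 * π)) ∧
  ∀ i s, deriv (x i) s = 0 → deriv (w i) s ≠ 0

lemma BL_mono {n : ℕ} {g : Fin n → ℝ → ℝ × ℂ} {m m' : ℝ} (h : BL g m) (hm : m' ≤ m) : BL g m' :=
  ⟨fun i s s' hs => (mul_le_mul_of_nonneg_right hm (abs_nonneg _)).trans (h.1 i s s' hs),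
   fun i k hik s s' => hm.trans (h.2 i k hik s s')⟩

lemma good_of_BL {n : ℕ} {x : Fin n → ℝ → ℝ} {w : Fin n → ℝ → ℂ} {m : ℝ} (hm : 0 < m)
    (hx : ∀ i, Differentiable ℝ (x i)) (hw : ∀ i, Differentiable ℝ (w i))
    (px : ∀ i, Function.Periodic (x i) (2 * π)) (pw : ∀ i, Function.Periodic (w i) (2 * π))
    (h : BL (fun i s => (x i s, w i s)) m) : Good x w := by
  constructor
  · intro i k s s' h1 h2
    refine BL_inj hm h (fun i u => ?_) i k s s' (Prod.ext h1 h2)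
    exact Prod.ext (px i u) (pw i u)
  · intro i s h1 h2
    apply BL_imm hm h i s
    have a := (hx i s).hasDerivAt
    have b := (hw i s).hasDerivAt
    rw [h1] at a
    rw [h2] at b
    exact a.prodMk b

lemma BL_of_good {n : ℕ} {x : Fin n → ℝ → ℝ} {w : Fin n → ℝ → ℂ}
    (hx : ∀ i, ContDiff ℝ ∞ (x i)) (hw : ∀ i, ContDiff ℝ ∞ (w i))
    (px : ∀ i, Function.Periodic (x i) (2 * π)) (pw : ∀ i, Function.Periodic (w i) (2 * π))
    (h : Good x w) : ∃ m > 0, BL (fun i s => (x i s, w i s)) m := by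
  apply BL_exists
  · exact fun i => (hx i).prodMk (hw i)
  · exact fun i u => Prod.ext (px i u) (pw i u)
  · intro i k s s' e
    exact h.1 i k s s' (congrArg Prod.fst e) (congrArg Prod.snd e)
  · intro i s e
    have a := ((hx i).differentiable (by simp) s).hasDerivAt
    have b := ((hw i).differentiable (by simp) s).hasDerivAt
    have c := (a.prodMk b).deriv
    rw [e] at c
    exact h.2 i s (congrArg Prod.fst c).symm (congrArg Prod.snd c).symm

lemma strict_lemma {x : ℝ → ℝ} {w w1 : ℝ → ℂ} (hx : Differentiable ℝ x) (hw : Differentiable ℝ w)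
    (hw1 : Differentiable ℝ w1) {r β : ℝ} (hr : 0 ≤ r) (hβ : β ∈ Icc (0:ℝ) 1)
    (hc : ∀ c, deriv x c = 0 → ∀ s, |s - c| ≤ r →
        0 < (conj (deriv w c) * deriv w s).re ∧
        0 ≤ (conj (deriv w c) * deriv w1 s).re ∧ 0 < (conj (deriv w c) * deriv w1 c).re)
    {a b : ℝ} (hab : a < b) (hba : b - a ≤ r) (e : x a = x b) :
    (1 - β) * w a + β * w1 a ≠ (1 - β) * w b + β * w1 b := by
  intro e2
  obtain ⟨c, hcab, hc0⟩ := exists_deriv_eq_zero hab hx.continuous.continuousOn e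
  set h : ℝ → ℝ := fun u => (conj (deriv w c) * ((1 - β) * w u + β * w1 u)).re with hh
  have hd : ∀ u, HasDerivAt h ((1 - β) * (conj (deriv w c) * deriv w u).re +
      β * (conj (deriv w c) * deriv w1 u).re) u := by
    intro u
    have h1 : HasDerivAt (fun u => conj (deriv w c) * ((1 - β) * w u + β * w1 u))
      (conj (deriv w c) * ((1 - β) * deriv w u + β * deriv w1 u)) u :=
      (((hw u).hasDerivAt.const_mul (1 - β : ℂ)).add ((hw1 u).hasDerivAt.const_mul (β : ℂ))).const_mul _
    have h2 := (Complex.reCLM.hasFDerivAt (x := conj (deriv w c) * ((1 - β) * w u + β * w1 u))).comp_hasDerivAt u h1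
    refine h2.congr_deriv ?_
    have : conj (deriv w c) * ((1 - β) * deriv w u + β * deriv w1 u) =
      ((1 - β : ℝ) : ℂ) * (conj (deriv w c) * deriv w u) + (β : ℂ) * (conj (deriv w c) * deriv w1 u) := by
      push_cast; ring
    rw [Complex.reCLM_apply, this, Complex.add_re, Complex.re_ofReal_mul, Complex.re_ofReal_mul]
  have hdd : Differentiable ℝ h := fun u => (hd u).differentiableAt
  have hmono : MonotoneOn h (Icc a b) := by
    apply monotoneOn_of_deriv_nonneg (convex_Icc a b) hdd.continuous.continuousOn hdd.differentiableOn
    intro u hu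
    rw [interior_Icc] at hu
    rw [(hd u).deriv]
    have h1 := hc c hc0 u (by
      rw [abs_le]; constructor <;> linarith [hu.1, hu.2, hcab.1, hcab.2])
    have := h1.1
    have := h1.2.1
    have := hβ.1
    have : 0 ≤ 1 - β := by linarith [hβ.2]
    positivity
  have hE : h a = h b := by simp only [hh, e2]
  have hconst : ∀ u ∈ Icc a b, h u = h a := by
    intro u hu
    apply le_antisymm
    · rw [hE]; exact hmono hu ⟨hab.le, le_rfl⟩ hu.2
    · exact hmono ⟨le_rfl, hab.le⟩ hu hu.1
  have hz : HasDerivAt h 0 c := by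
    apply (hasDerivAt_const c (h a)).congr_of_eventuallyEq
    filter_upwards [Icc_mem_nhds hcab.1 hcab.2] with u hu using hconst u hu
  have h1 := hz.unique (hd c)
  have h2 := hc c hc0 c (by simpa using hr)
  have h3 := h2.1
  have h4 := h2.2.2
  rcases eq_or_lt_of_le hβ.1 with h5 | h5
  · rw [← h5] at h1
    linarith
  · have : 0 ≤ 1 - β := by linarith [hβ.2]
    have : 0 < (1 - β) * (conj (deriv w c) * deriv w c).re +
      β * (conj (deriv w c) * deriv w1 c).re := by positivity
    linarith

lemma interp_good {n : ℕ} {x : Fin n → ℝ → ℝ} {w w1 : Fin n → ℝ → ℂ} {m : ℝ} (hm : 0 < m)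
    (hx : ∀ i, Differentiable ℝ (x i)) (hw : ∀ i, Differentiable ℝ (w i))
    (hw1 : ∀ i, Differentiable ℝ (w1 i))
    (px : ∀ i, Function.Periodic (x i) (2 * π)) (pw : ∀ i, Function.Periodic (w i) (2 * π))
    (pw1 : ∀ i, Function.Periodic (w1 i) (2 * π))
    (h : BL (fun i s => (x i s, w i s)) m)
    (r : Fin n → ℝ) (hr0 : ∀ i, 0 < r i) (hr1 : ∀ i, r i < 1)
    (hD : ∀ i s, ‖w1 i s - w i s‖ ≤ m * r i / 4)
    (hc : ∀ i c, deriv (x i) c = 0 → ∀ s, |s - c| ≤ r i →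
        0 < (conj (deriv (w i) c) * deriv (w i) s).re ∧
        0 ≤ (conj (deriv (w i) c) * deriv (w1 i) s).re ∧
        0 < (conj (deriv (w i) c) * deriv (w1 i) c).re)
    {β : ℝ} (hβ : β ∈ Icc (0:ℝ) 1) :
    Good x (fun i s => (1 - β) * w i s + β * w1 i s) := by
  constructor
  · intro i k s s' h1 h2
    have est : ∀ s s', (1 - β) * w i s + β * w1 i s = (1 - β) * w k s' + β * w1 k s' →
        x i s = x k s' → ‖((x i s, w i s) : ℝ × ℂ) - (x k s', w k s')‖ ≤ m * r i / 4 + m * r k / 4 := by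
      intro s s' h2 h1
      rw [Prod.mk_sub_mk, h1, sub_self, Prod.norm_mk, norm_zero, max_eq_right (norm_nonneg _)]
      have : w i s - w k s' = (β:ℂ) * ((w1 k s' - w k s') - (w1 i s - w i s)) := by
        linear_combination h2
      rw [this, norm_mul, Complex.norm_real, Real.norm_of_nonneg hβ.1]
      have h3 := norm_sub_le (w1 k s' - w k s') (w1 i s - w i s)
      have h4 := hD i s
      have h5 := hD k s'
      have h6 : β * ‖w1 k s' - w k s' - (w1 i s - w i s)‖ ≤ 1 * ‖w1 k s' - w k s' - (w1 i s - w i s)‖ :=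
        mul_le_mul_of_nonneg_right hβ.2 (norm_nonneg _)
      linarith
    have hik : i = k := by
      by_contra hik
      have h3 := h.2 i k hik s s'
      have h4 := est s s' h2 h1
      have := hr1 i
      have := hr1 k
      simp only at h3
      nlinarith
    refine ⟨hik, ?_⟩
    subst hik
    obtain ⟨j, hj⟩ := near_rep s s'
    refine ⟨j, ?_⟩
    have h1' : x i s = x i (s' + j * (2 * π)) := by rw [per_int (px i), h1]
    have h2' : (1 - β) * w i s + β * w1 i s =
        (1 - β) * w i (s' + j * (2 * π)) + β * w1 i (s' + j * (2 * π)) := by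
      rw [per_int (pw i), per_int (pw1 i)]; exact h2
    have h3 := h.1 i _ _ hj
    have h4 := est _ _ h2' h1'
    simp only at h3
    have h5 : |s - (s' + j * (2 * π))| ≤ r i := by
      have : m * |s - (s' + j * (2 * π))| ≤ m * r i := by nlinarith [hr0 i]
      exact le_of_mul_le_mul_left this hm
    rcases lt_trichotomy s (s' + j * (2 * π)) with hl | he | hl
    · exact absurd h2' (strict_lemma (hx i) (hw i) (hw1 i) (hr0 i).le hβ (hc i) hl
        (by linarith [(abs_le.1 h5).1]) h1')
    · exact he
    · exact absurd h2'.symm (strict_lemma (hx i) (hw i) (hw1 i) (hr0 i).le hβ (hc i) hl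
        (by linarith [(abs_le.1 h5).2]) h1'.symm)
  · intro i c hcc hd
    have h1 : HasDerivAt (fun s => (1 - β) * w i s + β * w1 i s)
      ((1 - β) * deriv (w i) c + β * deriv (w1 i) c) c :=
      ((hw i c).hasDerivAt.const_mul (1 - β : ℂ)).add ((hw1 i c).hasDerivAt.const_mul (β : ℂ))
    rw [h1.deriv] at hd
    have h2 := hc i c hcc c (by simpa using (hr0 i).le)
    have h3 := h2.1
    have h4 := h2.2.2
    have : conj (deriv (w i) c) * ((1 - β) * deriv (w i) c + β * deriv (w1 i) c) =
      ((1 - β : ℝ) : ℂ) * (conj (deriv (w i) c) * deriv (w i) c) +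
        (β : ℂ) * (conj (deriv (w i) c) * deriv (w1 i) c) := by
      push_cast; ring
    rw [hd, mul_zero] at this
    have h6 := congrArg Complex.re this
    rw [Complex.add_re, Complex.re_ofReal_mul, Complex.re_ofReal_mul, Complex.zero_re] at h6
    rcases eq_or_lt_of_le hβ.1 with h5 | h5
    · rw [← h5] at h6
      linarith
    · have : 0 ≤ 1 - β := by linarith [hβ.2]
      have : 0 < (1 - β) * (conj (deriv (w i) c) * deriv (w i) c).re +
        β * (conj (deriv (w i) c) * deriv (w1 i) c).re := by positivity
      linarith

lemma uT_hasDerivAt {θ : ℝ → ℝ} {θ' s : ℝ} (h : HasDerivAt θ θ' s) :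
    HasDerivAt (fun s => uT (θ s)) (uT (θ s) * (θ' * Complex.I)) s :=
  (h.ofReal_comp.mul_const Complex.I).cexp

lemma twist_good {n : ℕ} {x : Fin n → ℝ → ℝ} {w : Fin n → ℝ → ℂ}
    (hx : ∀ i, Differentiable ℝ (x i)) (hw : ∀ i, Differentiable ℝ (w i)) (h : Good x w)
    {p q u v : ℝ} (hp : p ≠ 0) :
    Good (fun i s => p * x i s + q) (fun i s => uT (u * x i s + v) * w i s) := by
  constructor
  · intro i k s s' h1 h2
    have h3 : x i s = x k s' := mul_left_cancel₀ hp (add_right_cancel h1)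
    simp only [h3] at h2
    exact h.1 i k s s' h3 (mul_left_cancel₀ (uT_ne _) h2)
  · intro i s h1 h2
    have a := (hx i s).hasDerivAt
    have b := (hw i s).hasDerivAt
    rw [((a.const_mul p).add_const q).deriv] at h1
    have h3 : deriv (x i) s = 0 := (mul_eq_zero.1 h1).resolve_left hp
    have c := (uT_hasDerivAt ((a.const_mul u).add_const v)).mul b
    have h2' := c.deriv.symm.trans h2
    rw [h3] at h2'
    simp only [mul_zero, Complex.ofReal_zero, zero_mul, zero_add] at h2'
    exact h.2 i s h3 ((mul_eq_zero.1 h2').resolve_left (uT_ne _))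

lemma good_phase {ι : Type*} [Finite ι] (ζ : ι → ℂ) (h : ∀ i, ζ i ≠ 0) :
    ∃ φ : ℝ, ∀ i, (ζ i * uT φ).re ≠ 0 := by
  have key : ∀ i, {φ | φ ∈ Ico 0 π ∧ (ζ i * uT φ).re = 0}.Finite := by
    intro i
    apply Set.Subsingleton.finite
    rintro a ⟨ha, ha'⟩ b ⟨hb, hb'⟩
    have e : ∀ φ, (ζ i * uT φ).re = (ζ i).re * Real.cos φ - (ζ i).im * Real.sin φ := by
      intro φ
      simp [uT, Complex.exp_ofReal_mul_I_re, Complex.exp_ofReal_mul_I_im]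
    rw [e] at ha' hb'
    have h1 : (ζ i).re * Real.sin (a - b) = 0 := by
      rw [Real.sin_sub]
      linear_combination (Real.sin a) * hb' - Real.sin b * ha'
    have h2 : (ζ i).im * Real.sin (a - b) = 0 := by
      rw [Real.sin_sub]
      linear_combination (Real.cos a) * hb' - Real.cos b * ha'
    have h3 : Real.sin (a - b) = 0 := by
      by_contra hne
      exact h i (Complex.ext ((mul_eq_zero.1 h1).resolve_right hne) ((mul_eq_zero.1 h2).resolve_right hne))
    have := (Real.sin_eq_zero_iff_of_lt_of_lt (by linarith [ha.1, hb.2]) (by linarith [ha.2, hb.1])).1 h3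
    linarith
  have h2 : (⋃ i, {φ | φ ∈ Ico 0 π ∧ (ζ i * uT φ).re = 0}).Finite := Set.finite_iUnion key
  obtain ⟨φ, h3, h4⟩ := (Ico_infinite Real.pi_pos).exists_notMem_finite h2
  refine ⟨φ, fun i hi => h4 ?_⟩
  exact mem_iUnion.2 ⟨i, h3, hi⟩

lemma shift_BL {n : ℕ} {x : Fin n → ℝ → ℝ} {w : Fin n → ℝ → ℂ} {m l : ℝ} (hl : |l| ≤ m / 4)
    (h : BL (fun i s => (x i s, w i s)) m) :
    BL (fun i s => (x i s + l * Real.cos s, w i s)) (m / 2) := by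
  have := BL_perturb (g' := fun i s => (x i s + l * Real.cos s, w i s)) (l := |l|) h ?_ ?_
  · exact BL_mono this (by linarith)
  · intro i s s'
    simp only [Prod.mk_sub_mk, sub_self, add_sub_cancel_left, Prod.norm_mk, norm_zero]
    rw [max_eq_left (norm_nonneg _), Real.norm_eq_abs, ← mul_sub, abs_mul]
    apply mul_le_mul_of_nonneg_left _ (abs_nonneg _)
    have := Real.abs_cos_sub_cos_le s s'
    exact this
  · intro i s
    simp only [Prod.mk_sub_mk, sub_self, add_sub_cancel_left, Prod.norm_mk, norm_zero]
    rw [max_eq_left (norm_nonneg _), Real.norm_eq_abs, abs_mul]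
    have := Real.abs_cos_le_one s
    nlinarith [abs_nonneg l]

theorem core {n : ℕ} (x : Fin n → ℝ → ℝ) (w : Fin n → ℝ → ℂ)
    (hx : ∀ i, ContDiff ℝ ∞ (x i)) (hw : ∀ i, ContDiff ℝ ∞ (w i))
    (px : ∀ i, Function.Periodic (x i) (2 * π)) (pw : ∀ i, Function.Periodic (w i) (2 * π))
    (ex : ∀ i s, x i (-s) = x i s) (ow : ∀ i s, w i (-s) = -w i s) (hg : Good x w) :
    ∃ (X : Fin n → ℝ × ℝ → ℝ) (W : Fin n → ℝ × ℝ → ℂ),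
      (∀ i, ContDiff ℝ ∞ (X i)) ∧ (∀ i, ContDiff ℝ ∞ (W i)) ∧
      (∀ i t s, X i (t, s + 2 * π) = X i (t, s)) ∧ (∀ i t s, W i (t, s + 2 * π) = W i (t, s)) ∧
      (∀ i t s, X i (t, -s) = X i (t, s)) ∧ (∀ i t s, W i (t, -s) = -W i (t, s)) ∧
      (∀ i s, X i (0, s) = x i s) ∧ (∀ i s, W i (0, s) = w i s) ∧
      (∀ t ∈ Icc (0:ℝ) 1, Good (fun i s => X i (t, s)) (fun i s => W i (t, s))) ∧
      ∀ i s, deriv (fun s => (W i (1, s)).im) s =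
        (W i (1, s)).re * deriv (fun s => X i (1, s)) s := by
  have hpi := Real.pi_pos
  obtain ⟨m, hm, hBL⟩ := BL_of_good hx hw px pw hg
  obtain ⟨l, hl0, hl1, hlfin⟩ : ∃ l : ℝ, 0 < l ∧ l < m / 4 ∧
      ∀ i, {s | s ∈ Icc 0 (2 * π) ∧ deriv (x i) s - l * Real.sin s = 0}.Finite := by
    have h1 : ∀ᵐ l : ℝ, ∀ i, {s | s ∈ Icc 0 (2 * π) ∧ deriv (x i) s - l * Real.sin s = 0}.Finite := by
      rw [ae_all_iff]
      intro i
      exact sard_finite _ (hx i).deriv'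
    have h2 : ∃ᵐ l : ℝ, l ∈ Ioo 0 (m / 4) := by
      rw [frequently_ae_mem_iff]
      rw [Real.volume_Ioo]
      simp only [ne_eq, ENNReal.ofReal_eq_zero, not_le]
      linarith
    obtain ⟨l, h3, h4⟩ := (h2.and_eventually h1).exists
    exact ⟨l, h3.1, h3.2, h4⟩
  set xt : Fin n → ℝ → ℝ := fun i s => x i s + l * Real.cos s with hxt
  have hxts : ∀ i, ContDiff ℝ ∞ (xt i) := fun i => (hx i).add (contDiff_const.mul Real.contDiff_cos)
  have pxt : ∀ i, Function.Periodic (xt i) (2 * π) := fun i s => by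
    simp only [hxt, px i s, Real.cos_add_two_pi]
  have ext : ∀ i s, xt i (-s) = xt i s := fun i s => by
    simp only [hxt, ex i s, Real.cos_neg]
  have hBLt : BL (fun i s => (xt i s, w i s)) (m / 2) :=
    shift_BL (by rw [abs_of_pos hl0]; exact hl1.le) hBL
  have hm2 : 0 < m / 2 := by positivity
  have hwd : ∀ i, Differentiable ℝ (w i) := fun i => (hw i).differentiable (by simp)
  have hxd : ∀ i, Differentiable ℝ (x i) := fun i => (hx i).differentiable (by simp)
  have hxtd : ∀ i, Differentiable ℝ (xt i) := fun i => (hxts i).differentiable (by simp)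
  have hgt := good_of_BL hm2 hxtd hwd pxt pw hBLt
  have hfin : ∀ i, {s | s ∈ Icc 0 (2 * π) ∧ deriv (xt i) s = 0}.Finite := by
    intro i
    convert hlfin i using 4 with s
    have h1 : deriv (xt i) s = deriv (x i) s + l * -Real.sin s :=
      ((hxd i s).hasDerivAt.add ((Real.hasDerivAt_cos s).const_mul l)).deriv
    rw [h1]
    constructor <;> intro h <;> linarith
  choose r hr0 hr1 hN using fun i => lemK (xt i) (w i) (hxts i) (hw i) (pxt i) (pw i) (ext i) (ow i)
    (hgt.2 i) (hfin i) hm2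
  obtain ⟨N, hN0, hN⟩ := ((eventually_gt_atTop (0:ℝ)).and (Filter.eventually_all.2 hN)).exists
  obtain ⟨φ, hφ⟩ : ∃ φ : ℝ, ∀ i c, deriv (xt i) c = 0 →
      (deriv (w i) c * uT (N * xt i c + φ)).re ≠ 0 := by
    have : ∀ i, Finite {s | s ∈ Icc 0 (2 * π) ∧ deriv (xt i) s = 0} := fun i => (hfin i).to_subtype
    obtain ⟨φ, hφ⟩ := good_phase (ι := Σ i, {s | s ∈ Icc 0 (2 * π) ∧ deriv (xt i) s = 0})
      (fun q => deriv (w q.1) q.2 * uT (N * xt q.1 q.2))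
      (fun q => mul_ne_zero (hgt.2 _ _ q.2.2.2) (uT_ne _))
    refine ⟨φ, fun i c hc => ?_⟩
    obtain ⟨k, hk⟩ := ico_rep c
    have h1 := hφ ⟨i, c + k * (2 * π), ⟨hk.1, hk.2.le⟩, by
      rw [per_int (deriv_periodic (pxt i))]; exact hc⟩
    simp only [per_int (pxt i), per_int (deriv_periodic (pw i))] at h1
    have h2 : uT (N * xt i c + φ) = uT (N * xt i c) * uT φ := by
      unfold uT
      rw [← Complex.exp_add]; congr 1; push_cast; ring
    rw [h2, ← mul_assoc]
    exact h1
  choose w1 hw1 pw1 ow1 hD hLeg hcrit using fun i => hN i φ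
  have hw1d : ∀ i, Differentiable ℝ (w1 i) := fun i => (hw1 i).differentiable (by simp)
  have hcrit' : ∀ i c, deriv (xt i) c = 0 → ∀ s, |s - c| ≤ r i →
        0 < (conj (deriv (w i) c) * deriv (w i) s).re ∧
        0 ≤ (conj (deriv (w i) c) * deriv (w1 i) s).re ∧
        0 < (conj (deriv (w i) c) * deriv (w1 i) c).re := by
    intro i c hc s hs
    obtain ⟨a, b, d⟩ := hcrit i c hc s hs
    exact ⟨a, b, d (hφ i c hc)⟩
  set A : ℝ → ℝ := fun t => Real.smoothTransition (2 * t) with hA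
  set B : ℝ → ℝ := fun t => Real.smoothTransition (2 * t - 1) with hB
  have hAs : ContDiff ℝ ∞ A := Real.smoothTransition.contDiff.comp (contDiff_const.mul contDiff_id)
  have hBs : ContDiff ℝ ∞ B :=
    Real.smoothTransition.contDiff.comp ((contDiff_const.mul contDiff_id).sub contDiff_const)
  have hBI : ∀ t, B t ∈ Icc (0:ℝ) 1 := fun t =>
    ⟨Real.smoothTransition.nonneg _, Real.smoothTransition.le_one _⟩
  have hA0 : A 0 = 0 := by simp [hA]
  have hB0 : B 0 = 0 := Real.smoothTransition.zero_of_nonpos (by norm_num)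
  have hA1 : A 1 = 1 := Real.smoothTransition.one_of_one_le (by norm_num)
  have hB1 : B 1 = 1 := Real.smoothTransition.one_of_one_le (by norm_num)
  set xa : Fin n → ℝ × ℝ → ℝ := fun i q => x i q.2 + A q.1 * l * Real.cos q.2 with hxa
  set wb : Fin n → ℝ × ℝ → ℂ := fun i q => (1 - B q.1) * w i q.2 + B q.1 * w1 i q.2 with hwb
  have hxas : ∀ i, ContDiff ℝ ∞ (xa i) := fun i =>
    ((hx i).comp contDiff_snd).add (((hAs.comp contDiff_fst).mul contDiff_const).mul
      (Real.contDiff_cos.comp contDiff_snd))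
  have hBC : ContDiff ℝ ∞ (fun q : ℝ × ℝ => (B q.1 : ℂ)) :=
    Complex.ofRealCLM.contDiff.comp (hBs.comp contDiff_fst)
  have hwbs : ∀ i, ContDiff ℝ ∞ (wb i) := fun i =>
    ((contDiff_const.sub hBC).mul ((hw i).comp contDiff_snd)).add
      (hBC.mul ((hw1 i).comp contDiff_snd))
  have hxa1 : ∀ t, A t = 1 → ∀ i s, xa i (t, s) = xt i s := by
    intro t ht i s
    simp [hxa, hxt, ht]
  refine ⟨fun i q => ((1 - q.1) + q.1 * N) * xa i q + q.1 * φ,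
    fun i q => uT ((q.1 * N) * xa i q + q.1 * φ) * wb i q, ?_, ?_, ?_, ?_, ?_, ?_, ?_, ?_, ?_, ?_⟩
  · intro i
    have := hxas i
    fun_prop
  · intro i
    have := hxas i
    refine (uT_contDiff.comp ?_).mul (hwbs i)
    fun_prop
  · intro i t s
    simp only [hxa, px i s, Real.cos_add_two_pi]
  · intro i t s
    simp only [hxa, hwb, px i s, pw i s, pw1 i s, Real.cos_add_two_pi]
  · intro i t s
    simp only [hxa, ex i s, Real.cos_neg]
  · intro i t s
    simp only [hxa, hwb, ex i s, ow i s, ow1 i s, Real.cos_neg]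
    ring
  · intro i s
    simp [hxa, hA0]
  · intro i s
    simp [hwb, hB0, uT]
  · intro t ht
    have hxad : ∀ i, Differentiable ℝ (fun s => xa i (t, s)) := fun i =>
      ((hxas i).comp (contDiff_prodMk_right t)).differentiable (by simp)
    have hwbd : ∀ i, Differentiable ℝ (fun s => wb i (t, s)) := fun i =>
      ((hwbs i).comp (contDiff_prodMk_right t)).differentiable (by simp)
    have hgood : Good (fun i s => xa i (t, s)) (fun i s => wb i (t, s)) := by
      rcases le_total t (1 / 2) with h | h
      · have hBt : B t = 0 := Real.smoothTransition.zero_of_nonpos (by linarith)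
        have e1 : (fun i s => wb i (t, s)) = w := by
          funext i s
          simp [hwb, hBt]
        have h1 := good_of_BL hm2 hxad hwd (fun i s => by
          simp only [hxa, px i s, Real.cos_add_two_pi]) pw
          (shift_BL (l := A t * l) (by
            rw [abs_mul, abs_of_pos hl0, abs_of_nonneg (Real.smoothTransition.nonneg _)]
            have := Real.smoothTransition.le_one (2 * t)
            nlinarith) hBL)
        rw [e1]
        exact h1
      · have hAt : A t = 1 := Real.smoothTransition.one_of_one_le (by linarith)
        have e1 : (fun i s => xa i (t, s)) = xt := by
          funext i s
          exact hxa1 t hAt i s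
        rw [e1]
        exact interp_good hm2 hxtd hwd hw1d pxt pw pw1 hBLt r hr0 hr1 hD hcrit' (hBI t)
    have hp : (1 - t) + t * N ≠ 0 := by
      rcases eq_or_lt_of_le ht.1 with h | h
      · rw [← h]; norm_num
      · have : 0 ≤ 1 - t := by linarith [ht.2]
        positivity
    exact twist_good (q := t * φ) (u := t * N) (v := t * φ) hxad hwbd hgood hp
  · intro i s
    have a : HasDerivAt (fun s => N * xt i s + φ) (N * deriv (xt i) s) s :=
      ((hxtd i s).hasDerivAt.const_mul N).add_const φ
    have b := (uT_hasDerivAt a).mul (hw1d i s).hasDerivAt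
    have c := (Complex.imCLM.hasFDerivAt (x := uT (N * xt i s + φ) * w1 i s)).comp_hasDerivAt s b
    have e1 : (fun s => (uT ((1 * N) * xa i (1, s) + 1 * φ) * wb i (1, s)).im) =
        Complex.imCLM ∘ ((fun s => uT (N * xt i s + φ)) * w1 i) := by
      funext s
      simp [hxa1 1 hA1, hwb, hB1]
    have e2 : (fun s => ((1 - 1) + 1 * N) * xa i (1, s) + 1 * φ) = fun s => N * xt i s + φ := by
      funext s
      simp [hxa1 1 hA1]
    have e3 : uT ((1 * N) * xa i (1, s) + 1 * φ) * wb i (1, s) = uT (N * xt i s + φ) * w1 i s := by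
      simp [hxa1 1 hA1, hwb, hB1]
    change deriv (fun s => (uT ((1 * N) * xa i (1, s) + 1 * φ) * wb i (1, s)).im) s =
      (uT ((1 * N) * xa i (1, s) + 1 * φ) * wb i (1, s)).re *
        deriv (fun s => ((1 - 1) + 1 * N) * xa i (1, s) + 1 * φ) s
    rw [e1, e2, e3, c.deriv, a.deriv]
    have h1 := hLeg i s
    rw [Complex.imCLM_apply, Complex.add_im, h1]
    have : uT (N * xt i s + φ) * (((N * deriv (xt i) s : ℝ) : ℂ) * Complex.I) * w1 i s =
      ((N * deriv (xt i) s : ℝ) : ℂ) * (Complex.I * (uT (N * xt i s + φ) * w1 i s)) := by ring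
    rw [this, Complex.im_ofReal_mul]
    simp
    ring

def cc0 (s : ℝ) : EuclideanSpace ℝ (Fin 2) := !₂[Real.cos s, Real.sin s]

lemma cc0_mem (s : ℝ) : cc0 s ∈ Metric.sphere (0 : EuclideanSpace ℝ (Fin 2)) 1 := by
  rw [mem_sphere_zero_iff_norm, EuclideanSpace.norm_eq]
  simp [cc0]

def cc (s : ℝ) : S1 := ⟨cc0 s, cc0_mem s⟩

def toC (p : EuclideanSpace ℝ (Fin 2)) : ℂ := (p 0 : ℂ) + (p 1 : ℂ) * Complex.I

lemma toC_contDiff : ContDiff ℝ ∞ toC := by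
  unfold toC
  have h0 : ContDiff ℝ ∞ fun p : EuclideanSpace ℝ (Fin 2) => (p 0 : ℂ) :=
    Complex.ofRealCLM.contDiff.comp (EuclideanSpace.proj (𝕜 := ℝ) (0 : Fin 2)).contDiff
  have h1 : ContDiff ℝ ∞ fun p : EuclideanSpace ℝ (Fin 2) => (p 1 : ℂ) :=
    Complex.ofRealCLM.contDiff.comp (EuclideanSpace.proj (𝕜 := ℝ) (1 : Fin 2)).contDiff
  exact h0.add (h1.mul contDiff_const)

lemma toC_inj {p q : EuclideanSpace ℝ (Fin 2)} (h : toC p = toC q) : p = q := by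
  have h1 := congrArg Complex.re h
  have h2 := congrArg Complex.im h
  simp [toC] at h1 h2
  ext i
  fin_cases i
  · exact h1
  · exact h2

lemma toC_cc (s : ℝ) : toC (cc s : EuclideanSpace ℝ (Fin 2)) = Complex.exp (s * Complex.I) := by
  rw [Complex.exp_mul_I]
  simp [toC, cc, cc0]

lemma toC_norm (p : S1) : ‖toC p‖ = 1 := by
  have h : ‖(p : EuclideanSpace ℝ (Fin 2))‖ = 1 := mem_sphere_zero_iff_norm.1 p.2
  rw [EuclideanSpace.norm_eq] at h
  have h2 : ‖toC p‖ ^ 2 = 1 := by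
    rw [← Complex.normSq_eq_norm_sq]
    have := Real.sqrt_eq_one.1 h
    simp [Complex.normSq_apply, toC] at this ⊢
    nlinarith
  nlinarith [norm_nonneg (toC p)]

def ang (p : S1) : ℝ := Complex.arg (toC p)

lemma cc_ang (p : S1) : cc (ang p) = p := by
  apply Subtype.ext
  apply toC_inj
  rw [toC_cc]
  have := Complex.norm_mul_exp_arg_mul_I (toC p)
  rw [toC_norm] at this
  simpa [ang] using this

lemma cc_eq_iff (s s' : ℝ) : cc s = cc s' ↔ ∃ j : ℤ, s = s' + j * (2 * π) := by
  have h1 : cc s = cc s' ↔ Complex.exp (s * Complex.I) = Complex.exp (s' * Complex.I) := by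
    rw [← toC_cc, ← toC_cc]
    exact ⟨fun h => by rw [h], fun h => Subtype.ext (toC_inj h)⟩
  rw [h1, Complex.exp_eq_exp_iff_exists_int]
  apply exists_congr
  intro j
  constructor
  · intro h
    have := congrArg Complex.im h
    simpa using this
  · intro h
    rw [h]; push_cast; ring

lemma cc_surj (p : S1) : ∃ s, cc s = p := ⟨ang p, cc_ang p⟩

lemma cc0_contDiff : ContDiff ℝ ∞ cc0 := by
  rw [contDiff_euclidean]
  intro i
  fin_cases i
  · exact Real.contDiff_cos
  · exact Real.contDiff_sin

lemma cc_contMDiff : ContMDiff 𝓘(ℝ, ℝ) (𝓡 1) ∞ cc := by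
  haveI := Fact.mk (@finrank_euclideanSpace_fin ℝ _ (1 + 1))
  have h : ContMDiff 𝓘(ℝ, ℝ) 𝓘(ℝ, EuclideanSpace ℝ (Fin (1 + 1))) ∞ cc0 := cc0_contDiff.contMDiff
  exact ContMDiff.codRestrict_sphere (n := 1) h cc0_mem

lemma coe_S1_contMDiff : ContMDiff (𝓡 1) 𝓘(ℝ, EuclideanSpace ℝ (Fin 2)) ∞
    (fun p : S1 => (p : EuclideanSpace ℝ (Fin 2))) := by
  haveI := Fact.mk (@finrank_euclideanSpace_fin ℝ _ (1 + 1))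
  exact contMDiff_coe_sphere (E := EuclideanSpace ℝ (Fin (1 + 1))) (n := 1)

def tv (s : ℝ) : EuclideanSpace ℝ (Fin 1) := mfderiv 𝓘(ℝ, ℝ) (𝓡 1) cc s (1 : ℝ)

lemma deriv_comp_cc {E : Type*} [NormedAddCommGroup E] [NormedSpace ℝ E] (L : S1 → E)
    (hL : ContMDiff (𝓡 1) 𝓘(ℝ, E) ∞ L) (s : ℝ) :
    deriv (fun s => L (cc s)) s = mfderiv (𝓡 1) 𝓘(ℝ, E) L (cc s) (tv s) := by
  have h1 : MDifferentiableAt 𝓘(ℝ, ℝ) (𝓡 1) cc s := (cc_contMDiff.mdifferentiable (by simp)) s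
  have h2 : MDifferentiableAt (𝓡 1) 𝓘(ℝ, E) L (cc s) := (hL.mdifferentiable (by simp)) _
  have h3 := mfderiv_comp s h2 h1
  rw [mfderiv_eq_fderiv] at h3
  have h4 := congrArg (fun f : ℝ →L[ℝ] E => f 1) h3
  exact h4

lemma tv_ne (s : ℝ) : tv s ≠ 0 := by
  intro h
  have h1 := deriv_comp_cc (fun p : S1 => (p : EuclideanSpace ℝ (Fin 2))) coe_S1_contMDiff s
  rw [h] at h1
  replace h1 : deriv cc0 s = 0 := h1.trans (map_zero _)
  have hd : ∀ i, deriv (fun s => cc0 s i) s = 0 := by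
    intro i
    have a := (cc0_contDiff.differentiable (by simp) s).hasDerivAt
    rw [h1] at a
    exact ((EuclideanSpace.proj (𝕜 := ℝ) i).hasFDerivAt.comp_hasDerivAt s a).deriv.trans (by simp)
  have h0 := hd 0
  have h1 := hd 1
  simp [cc0] at h0 h1
  have := Real.sin_sq_add_cos_sq s
  rw [h0, h1] at this
  norm_num at this

lemma tv_span (s : ℝ) (v : EuclideanSpace ℝ (Fin 1)) : ∃ a : ℝ, v = a • tv s := by
  have h0 : tv s 0 ≠ 0 := by
    intro h
    apply tv_ne s
    ext i
    fin_cases i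
    exact h
  refine ⟨v 0 / tv s 0, ?_⟩
  ext i
  fin_cases i
  simp
  field_simp

lemma mfderiv_inj_iff {E : Type*} [NormedAddCommGroup E] [NormedSpace ℝ E] (L : S1 → E)
    (hL : ContMDiff (𝓡 1) 𝓘(ℝ, E) ∞ L) (s : ℝ) :
    Function.Injective (mfderiv (𝓡 1) 𝓘(ℝ, E) L (cc s)) ↔ deriv (fun s => L (cc s)) s ≠ 0 := by
  rw [deriv_comp_cc L hL]
  constructor
  · intro h h1
    exact tv_ne s (h (h1.trans (map_zero _).symm))
  · intro h
    rw [injective_iff_map_eq_zero]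
    intro v hv
    obtain ⟨a, ha⟩ := tv_span s v
    subst ha
    have h2 : mfderiv (𝓡 1) 𝓘(ℝ, E) L (cc s) (a • tv s) = a • mfderiv (𝓡 1) 𝓘(ℝ, E) L (cc s) (tv s) :=
      map_smul _ _ _
    have h3 := h2.symm.trans hv
    have h4 := (smul_eq_zero.1 h3).resolve_right h
    change a • tv s = 0
    rw [h4, zero_smul]

lemma descend {E : Type*} [NormedAddCommGroup E] [NormedSpace ℝ E] (f : ℝ × ℝ → E)
    (hf : ContDiff ℝ ∞ f) (pf : ∀ t s, f (t, s + 2 * π) = f (t, s)) :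
    ∃ F : ℝ × S1 → E, ContMDiff ((𝓘(ℝ, ℝ)).prod (𝓡 1)) 𝓘(ℝ, E) ∞ F ∧
      ∀ t s, F (t, cc s) = f (t, s) := by
  have hper : ∀ t s s', cc s = cc s' → f (t, s) = f (t, s') := by
    intro t s s' h
    obtain ⟨j, hj⟩ := (cc_eq_iff s s').1 h
    rw [hj]
    exact per_int (f := fun s => f (t, s)) (fun s => pf t s) s' j
  refine ⟨fun q => f (q.1, ang q.2), ?_, fun t s => hper _ _ _ (cc_ang _)⟩
  have gen : ∀ (G : EuclideanSpace ℝ (Fin 2) → ℝ) (q : ℝ × S1), ContDiffAt ℝ ∞ G q.2 →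
      ContMDiffAt ((𝓘(ℝ, ℝ)).prod (𝓡 1)) 𝓘(ℝ, E) ∞ (fun q : ℝ × S1 => f (q.1, G q.2)) q := by
    intro G q hG
    have h1 : ContMDiffAt ((𝓘(ℝ, ℝ)).prod (𝓡 1)) 𝓘(ℝ, EuclideanSpace ℝ (Fin 2)) ∞
        (fun q : ℝ × S1 => (q.2 : EuclideanSpace ℝ (Fin 2))) q :=
      (coe_S1_contMDiff.comp contMDiff_snd) q
    have h2 : ContMDiffAt ((𝓘(ℝ, ℝ)).prod (𝓡 1)) 𝓘(ℝ, ℝ) ∞ (fun q : ℝ × S1 => G q.2) q :=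
      ContMDiffAt.comp q (g := G) hG.contMDiffAt h1
    have h3 : ContMDiffAt ((𝓘(ℝ, ℝ)).prod (𝓡 1)) 𝓘(ℝ, ℝ × ℝ) ∞ (fun q : ℝ × S1 => (q.1, G q.2)) q :=
      ContMDiffAt.prodMk_space contMDiffAt_fst h2
    exact ContMDiffAt.comp q (g := f) hf.contMDiff.contMDiffAt h3
  have hlog : ∀ z : ℂ, z ∈ Complex.slitPlane → ContDiffAt ℝ ∞ Complex.arg z := by
    intro z hz
    have h1 : ContDiffAt ℝ ∞ Complex.log z := (Complex.contDiffAt_log hz).restrict_scalars ℝ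
    have h2 := Complex.imCLM.contDiff.contDiffAt.comp z h1
    have h3 : (Complex.imCLM ∘ Complex.log) = Complex.arg := by
      funext z; simp [Complex.log_im]
    rw [h3] at h2
    exact h2
  intro q
  by_cases hq : toC q.2 ∈ Complex.slitPlane
  · exact gen (fun p => Complex.arg (toC p)) q
      ((hlog _ hq).comp (q.2 : EuclideanSpace ℝ (Fin 2)) toC_contDiff.contDiffAt)
  · have hq2 : -toC q.2 ∈ Complex.slitPlane := by
      rw [Complex.mem_slitPlane_iff] at hq ⊢
      push Not at hq
      left
      have hne : toC q.2 ≠ 0 := by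
        intro h
        have := toC_norm q.2
        rw [h] at this
        simp at this
      rcases lt_or_eq_of_le hq.1 with h | h
      · simpa using h
      · exact absurd (Complex.ext h hq.2) hne
    have h1 := gen (fun p => Complex.arg (-toC p) + π) q
      (((hlog _ hq2).comp (q.2 : EuclideanSpace ℝ (Fin 2)) toC_contDiff.neg.contDiffAt).add contDiffAt_const)
    convert h1 using 2 with q'
    apply hper
    rw [cc_ang]
    apply Subtype.ext
    apply toC_inj
    rw [toC_cc]
    have := Complex.norm_mul_exp_arg_mul_I (-toC q'.2)
    rw [norm_neg, toC_norm] at this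
    push_cast
    rw [add_mul, Complex.exp_add, Complex.exp_pi_mul_I]
    simp at this
    rw [this]; ring

lemma cc_continuous : Continuous cc := cc_contMDiff.continuous

lemma tau_tau (p : R3) : tau (tau p) = p := by simp [tau]

lemma tau_continuous : Continuous tau := by unfold tau; fun_prop

def tauL : R3 →L[ℝ] R3 :=
  (ContinuousLinearMap.fst ℝ ℝ (ℝ × ℝ)).prod (-(ContinuousLinearMap.snd ℝ ℝ (ℝ × ℝ)))

lemma tauL_apply (p : R3) : tauL p = tau p := by
  simp [tauL, tau]; rfl

lemma sigma_lift (L : S1 → R3) (hc : Continuous L) (inj : Function.Injective L)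
    (hτ : tau '' range L = range L) (s0 : ℝ) (h0 : tau (L (cc s0)) = L (cc s0)) :
    ∃ σ : ℝ → ℝ, Continuous σ ∧ σ s0 = s0 ∧ ∀ s, L (cc (σ s)) = tau (L (cc s)) := by
  have hex : ∀ p, ∃ q, L q = tau (L p) := by
    intro p
    have : tau (L p) ∈ range L := hτ ▸ mem_image_of_mem tau (mem_range_self p)
    exact this
  choose σ0 hσ0 using hex
  have hemb : IsClosedEmbedding L := hc.isClosedEmbedding inj
  have hσc : Continuous σ0 := by
    rw [hemb.isInducing.continuous_iff]
    have : L ∘ σ0 = tau ∘ L := funext hσ0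
    rw [this]
    exact tau_continuous.comp hc
  have hfc : Continuous fun s : ℝ => (⟨toC (σ0 (cc s)), by
      simp [Submonoid.unitSphere, toC_norm]⟩ : Circle) := by
    refine Continuous.subtype_mk ?_ _
    exact toC_contDiff.continuous.comp (continuous_subtype_val.comp (hσc.comp cc_continuous))
  have hfix : σ0 (cc s0) = cc s0 := inj (by rw [hσ0, h0])
  obtain ⟨F, ⟨hF0, hF⟩, _⟩ := Circle.isCoveringMap_exp.existsUnique_continuousMap_lifts
    ⟨_, hfc⟩ s0 s0 (by
      apply Subtype.ext
      change Complex.exp (s0 * Complex.I) = toC (σ0 (cc s0))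
      rw [hfix, toC_cc])
  refine ⟨F, F.continuous, hF0, fun s => ?_⟩
  rw [← hσ0]
  congr 1
  apply Subtype.ext
  apply toC_inj
  rw [toC_cc]
  have := congrArg Subtype.val (congrFun hF s)
  exact this

lemma lift_deriv (γ : ℝ → R3) (hγ : ContDiff ℝ ∞ γ) (imm : ∀ s, deriv γ s ≠ 0)
    (σ : ℝ → ℝ) (hσ : Continuous σ) (h : ∀ s, γ (σ s) = tau (γ s)) (s : ℝ) :
    ∃ d, HasDerivAt σ d s ∧ d • deriv γ (σ s) = tau (deriv γ s) := by
  have hd : Differentiable ℝ γ := hγ.differentiable (by simp)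
  suffices ∃ d, HasDerivAt σ d s by
    obtain ⟨d, hd'⟩ := this
    refine ⟨d, hd', ?_⟩
    have h1 : HasDerivAt (γ ∘ σ) (d • deriv γ (σ s)) s := (hd (σ s)).hasDerivAt.scomp s hd'
    have h2 : HasDerivAt (tauL ∘ γ) (tauL (deriv γ s)) s :=
      tauL.hasFDerivAt.comp_hasDerivAt s (hd s).hasDerivAt
    have h3 : γ ∘ σ = tauL ∘ γ := by
      funext u; simp [h, tauL_apply]
    rw [h3] at h1
    rw [h1.unique h2, tauL_apply]
  have key : ∀ F : R3 →L[ℝ] ℝ, F (deriv γ (σ s)) ≠ 0 → ∃ d, HasDerivAt σ d s := by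
    intro F hF
    have a : HasStrictDerivAt (F ∘ γ) (F (deriv γ (σ s))) (σ s) :=
      F.hasStrictFDerivAt.comp_hasStrictDerivAt (σ s) (hγ.contDiffAt.hasStrictDerivAt (by simp))
    have b := a.to_localInverse hF
    have c := (a.hasStrictFDerivAt_equiv hF).eventually_left_inverse
    have e := hσ.continuousAt.eventually c
    have k : HasDerivAt (F ∘ (tauL ∘ γ)) (F (tauL (deriv γ s))) s :=
      F.hasFDerivAt.comp_hasDerivAt s (tauL.hasFDerivAt.comp_hasDerivAt s (hd s).hasDerivAt)
    have hk : (F ∘ (tauL ∘ γ)) s = (F ∘ γ) (σ s) := by simp [h, tauL_apply]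
    rw [← hk] at b
    have b2 := b.hasDerivAt.comp s k
    refine ⟨_, b2.congr_of_eventuallyEq ?_⟩
    filter_upwards [e] with u hu
    have hk' : (F ∘ (tauL ∘ γ)) u = (F ∘ γ) (σ u) := by simp [h, tauL_apply]
    rw [Function.comp_apply, hk']
    exact hu.symm
  by_contra hcon
  apply imm (σ s)
  have h1 : ContinuousLinearMap.fst ℝ ℝ (ℝ × ℝ) (deriv γ (σ s)) = 0 := by
    by_contra hne; exact hcon (key _ hne)
  have h2 : ((ContinuousLinearMap.fst ℝ ℝ ℝ).comp (ContinuousLinearMap.snd ℝ ℝ (ℝ × ℝ)))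
      (deriv γ (σ s)) = 0 := by
    by_contra hne; exact hcon (key _ hne)
  have h3 : ((ContinuousLinearMap.snd ℝ ℝ ℝ).comp (ContinuousLinearMap.snd ℝ ℝ (ℝ × ℝ)))
      (deriv γ (σ s)) = 0 := by
    by_contra hne; exact hcon (key _ hne)
  exact Prod.ext h1 (Prod.ext h2 h3)

def en (v : R3) : ℝ := √(v.1 ^ 2 + v.2.1 ^ 2 + v.2.2 ^ 2)

lemma en_tau (v : R3) : en (tau v) = en v := by simp [en, tau]

lemma en_smul (c : ℝ) (v : R3) : en (c • v) = |c| * en v := by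
  simp only [en, Prod.smul_fst, Prod.smul_snd, smul_eq_mul]
  rw [← Real.sqrt_sq_eq_abs, ← Real.sqrt_mul (sq_nonneg c)]
  congr 1; ring

lemma en_arg_pos {v : R3} (hv : v ≠ 0) : 0 < v.1 ^ 2 + v.2.1 ^ 2 + v.2.2 ^ 2 := by
  by_contra hcon
  push Not at hcon
  apply hv
  have h1 := sq_nonneg v.1
  have h2 := sq_nonneg v.2.1
  have h3 := sq_nonneg v.2.2
  refine Prod.ext ?_ (Prod.ext ?_ ?_)
  · exact pow_eq_zero_iff (two_ne_zero) |>.1 (by linarith)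
  · exact pow_eq_zero_iff (two_ne_zero) |>.1 (by linarith)
  · exact pow_eq_zero_iff (two_ne_zero) |>.1 (by linarith)

lemma en_pos {v : R3} (hv : v ≠ 0) : 0 < en v := Real.sqrt_pos.2 (en_arg_pos hv)

/-- normalized arclength -/
lemma arclength (e : ℝ → ℝ) (he : ContDiff ℝ ∞ e) (pe : Function.Periodic e (2 * π))
    (e0 : ∀ s, 0 < e s) (s0 : ℝ) :
    ∃ (g : ℝ ≃ₜ ℝ) (k : ℝ), 0 < k ∧ ContDiff ℝ ∞ g ∧ ContDiff ℝ ∞ g.symm ∧ g s0 = 0 ∧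
      (∀ s, HasDerivAt g (k * e s) s) ∧ ∀ s, g (s + 2 * π) = g s + 2 * π := by
  have hpi := Real.pi_pos
  have hec := he.continuous
  have ii : ∀ a b, IntervalIntegrable e volume a b := fun a b => hec.intervalIntegrable _ _
  set l : ℝ := ∫ u in (0:ℝ)..(2 * π), e u with hl
  have hlpos : 0 < l := intervalIntegral.intervalIntegral_pos_of_pos (ii _ _) e0 (by positivity)
  set k : ℝ := 2 * π / l with hk
  have hkpos : 0 < k := by positivity
  set g : ℝ → ℝ := fun s => k * ∫ u in s0..s, e u with hg
  have hd : ∀ s, HasDerivAt g (k * e s) s := fun s =>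
    ((hec.integral_hasStrictDerivAt s0 s).hasDerivAt).const_mul k
  have hgc : ContDiff ℝ ∞ g := by
    rw [contDiff_infty_iff_deriv]
    refine ⟨fun s => (hd s).differentiableAt, ?_⟩
    have : deriv g = fun s => k * e s := funext fun s => (hd s).deriv
    rw [this]
    exact contDiff_const.mul he
  have hg0 : g s0 = 0 := by simp [hg]
  have hgp : ∀ s, g (s + 2 * π) = g s + 2 * π := by
    intro s
    have h1 := pe.intervalIntegral_add_eq s 0
    rw [zero_add, ← hl] at h1
    simp only [hg]
    rw [← intervalIntegral.integral_add_adjacent_intervals (ii s0 s) (ii s _), h1, mul_add]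
    congr 1
    rw [hk]; field_simp
  have hgpi : ∀ (j : ℤ), g (s0 + j * (2 * π)) = j * (2 * π) := by
    intro j
    have : Function.Periodic (fun s => g s - s) (2 * π) := fun s => by
      simp only [hgp]; ring
    have h2 := per_int this s0 j
    simp only [hg0] at h2
    linarith
  have hmono : StrictMono g := strictMono_of_deriv_pos fun s => by
    rw [(hd s).deriv]; exact mul_pos hkpos (e0 s)
  have hsurj : Function.Surjective g := by
    intro y
    obtain ⟨j, hj⟩ := ico_rep y
    have h1 : y ∈ Icc (g (s0 + ((-j : ℤ) : ℝ) * (2 * π))) (g (s0 + ((-j + 1 : ℤ) : ℝ) * (2 * π))) := by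
      rw [hgpi, hgpi]
      push_cast
      constructor <;> linarith [hj.1, hj.2]
    obtain ⟨u, _, hu⟩ := intermediate_value_Icc (by push_cast; nlinarith) hgc.continuous.continuousOn h1
    exact ⟨u, hu⟩
  set G : ℝ ≃ₜ ℝ := (hmono.orderIsoOfSurjective g hsurj).toHomeomorph with hG
  have hGg : ∀ s, G s = g s := fun s => rfl
  have hGf : (G : ℝ → ℝ) = g := rfl
  refine ⟨G, k, hkpos, by rw [hGf]; exact hgc, ?_, by rw [hGg]; exact hg0, by rw [hGf]; exact hd,
    by rw [hGf]; exact hgp⟩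
  exact G.contDiff_symm_deriv (f' := fun s => k * e s) (fun s => (mul_pos hkpos (e0 s)).ne')
    (by rw [hGf]; exact hd) (by rw [hGf]; exact hgc)

lemma normalize_comp (L : S1 → R3) (hL : ContMDiff (𝓡 1) 𝓘(ℝ, R3) ∞ L) (inj : Function.Injective L)
    (imm : ∀ s, Function.Injective (mfderiv (𝓡 1) 𝓘(ℝ, R3) L s))
    (hτ : tau '' range L = range L) (h2 : (range L ∩ xAxisSet).encard = 2) :
    ∃ g : ℝ ≃ₜ ℝ, ContDiff ℝ ∞ g ∧ ContDiff ℝ ∞ g.symm ∧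
      (∀ s, g (s + 2 * π) = g s + 2 * π) ∧ (∀ s, deriv g s ≠ 0) ∧ (∀ s, deriv g.symm s ≠ 0) ∧
      ∀ u, L (cc (g.symm (-u))) = tau (L (cc (g.symm u))) := by
  have hpi := Real.pi_pos
  set γ : ℝ → R3 := fun s => L (cc s) with hγd
  have hγ : ContDiff ℝ ∞ γ := contMDiff_iff_contDiff.1 (hL.comp cc_contMDiff)
  have hγ' : ∀ s, deriv γ s ≠ 0 := fun s => (mfderiv_inj_iff L hL s).1 (imm _)
  have pγ : Function.Periodic γ (2 * π) := fun s => by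
    simp only [hγd]
    congr 1
    exact (cc_eq_iff _ _).2 ⟨1, by simp⟩
  obtain ⟨p0, ⟨q0, rfl⟩, hp0⟩ : (range L ∩ xAxisSet).Nonempty := by
    rw [← Set.encard_ne_zero, h2]; simp
  obtain ⟨s0, rfl⟩ := cc_surj q0
  have hfix : tau (L (cc s0)) = L (cc s0) := by
    obtain ⟨a, b⟩ := hp0
    exact Prod.ext rfl (Prod.ext (by simp [tau, a]) (by simp [tau, b]))
  obtain ⟨σ, hσ, hσ0, hσγ⟩ := sigma_lift L hL.continuous inj hτ s0 hfix
  choose d hd hd2 using lift_deriv γ hγ hγ' σ hσ hσγ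
  have hdγ : ContDiff ℝ ∞ (deriv γ) := hγ.deriv'
  have hes : ContDiff ℝ ∞ fun s => en (deriv γ s) := by
    unfold en
    apply ContDiff.sqrt
    · fun_prop
    · exact fun s => (en_arg_pos (hγ' s)).ne'
  have pe : Function.Periodic (fun s => en (deriv γ s)) (2 * π) := fun s => by
    simp only [deriv_periodic pγ s]
  obtain ⟨g, k, hk, hg, hgs, hg0, hgd, hgp⟩ := arclength _ hes pe (fun s => en_pos (hγ' s)) s0
  have hgne : ∀ s, deriv g s ≠ 0 := fun s => by
    rw [(hgd s).deriv]; exact (mul_pos hk (en_pos (hγ' s))).ne'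
  have hen : ∀ s, |d s| * en (deriv γ (σ s)) = en (deriv γ s) := by
    intro s
    rw [← en_smul, hd2, en_tau]
  have hdne : ∀ s, d s ≠ 0 := by
    intro s h
    have h1 := hen s
    rw [h, abs_zero, zero_mul] at h1
    exact (en_pos (hγ' s)).ne h1
  have hcomp : ∀ s, HasDerivAt (fun s => g (σ s)) (k * en (deriv γ (σ s)) * d s) s := fun s =>
    (hgd (σ s)).comp s (hd s)
  refine ⟨g, hg, hgs, hgp, hgne, ?_, ?_⟩
  · intro s h
    have h1 : HasDerivAt (g ∘ g.symm) (deriv g (g.symm s) * deriv g.symm s) s :=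
      (hg.differentiable (by simp) _).hasDerivAt.comp s (hgs.differentiable (by simp) s).hasDerivAt
    rw [h, mul_zero] at h1
    have h3 : (g ∘ g.symm) = id := by funext u; simp
    rw [h3] at h1
    exact one_ne_zero ((hasDerivAt_id s).unique h1)
  · have hneg : ∀ s, g (σ s) = -g s := by
      rcases hasDerivWithinAt_forall_lt_or_forall_gt_of_forall_ne (f := σ) (f' := d) convex_univ
        (fun x _ => (hd x).hasDerivWithinAt) (m := 0) (fun x _ => hdne x) with hlt | hgt
      · have hz : ∀ s, HasDerivAt (fun s => g (σ s) + g s) 0 s := by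
          intro s
          refine ((hcomp s).add (hgd s)).congr_deriv ?_
          have := hen s
          rw [abs_of_neg (hlt s (mem_univ s))] at this
          rw [← this]; ring
        have hconst := is_const_of_deriv_eq_zero (fun s => (hz s).differentiableAt)
          (fun s => (hz s).deriv)
        intro s
        have := hconst s s0
        simp only [hσ0, hg0] at this
        linarith
      · exfalso
        have hz : ∀ s, HasDerivAt (fun s => g (σ s) - g s) 0 s := by
          intro s
          refine ((hcomp s).sub (hgd s)).congr_deriv ?_
          have := hen s
          rw [abs_of_pos (hgt s (mem_univ s))] at this
          rw [← this]; ring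
        have hconst := is_const_of_deriv_eq_zero (fun s => (hz s).differentiableAt)
          (fun s => (hz s).deriv)
        have hid : ∀ s, σ s = s := by
          intro s
          have := hconst s s0
          simp only [hσ0, hg0] at this
          exact g.injective (by linarith)
        have hax : range L ∩ xAxisSet = range L := by
          apply inter_eq_left.2
          rintro _ ⟨q, rfl⟩
          obtain ⟨s, rfl⟩ := cc_surj q
          have h3 := hσγ s
          rw [hid] at h3
          have h4 := congrArg (fun p : R3 => p.2.1) h3
          have h5 := congrArg (fun p : R3 => p.2.2) h3
          simp only [tau] at h4 h5
          exact ⟨self_eq_neg.1 h4, self_eq_neg.1 h5⟩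
        rw [hax] at h2
        have hfinR : (range L).Finite := by
          apply Set.finite_of_encard_eq_coe (k := 2)
          exact_mod_cast h2
        have hsub : (γ '' Ico 0 (2 * π)).Finite := hfinR.subset (by
          rintro _ ⟨s, _, rfl⟩; exact mem_range_self _)
        have hinjOn : InjOn γ (Ico 0 (2 * π)) := by
          intro a ha b hb hab
          obtain ⟨j, hj⟩ := (cc_eq_iff a b).1 (inj hab)
          have : j = 0 := by
            apply per_eq_zero_of_lt
            rw [abs_lt]
            constructor <;> linarith [ha.1, ha.2, hb.1, hb.2]
          subst this
          simpa using hj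
        exact (Ico_infinite (show (0:ℝ) < 2 * π by positivity)) (hsub.of_finite_image hinjOn)
    intro u
    have h1 : σ (g.symm u) = g.symm (-u) := by
      apply g.injective
      rw [hneg]; simp
    rw [← h1, hσγ]

def pack (a : ℝ) (b : ℂ) : R3 := (a, b.re, b.im)

lemma pack_inj {a a' : ℝ} {b b' : ℂ} (h : pack a b = pack a' b') : a = a' ∧ b = b' := by
  simp only [pack, Prod.mk.injEq] at h
  exact ⟨h.1, Complex.ext h.2.1 h.2.2⟩

lemma pack_deriv {a : ℝ → ℝ} {b : ℝ → ℂ} {g : ℝ → ℝ} (ha : ContDiff ℝ ∞ a) (hb : ContDiff ℝ ∞ b)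
    (hg : ContDiff ℝ ∞ g) (s : ℝ) :
    HasDerivAt (fun s => pack (a (g s)) (b (g s)))
      (deriv g s * deriv a (g s), deriv g s * (deriv b (g s)).re, deriv g s * (deriv b (g s)).im) s := by
  have h1 := (ha.differentiable (by simp) (g s)).hasDerivAt
  have h2 := (hb.differentiable (by simp) (g s)).hasDerivAt
  have h3 := (hg.differentiable (by simp) s).hasDerivAt
  have h4 : HasDerivAt (fun u => (b u).re) (deriv b (g s)).re (g s) :=
    (Complex.reCLM.hasFDerivAt.comp_hasDerivAt _ h2)
  have h5 : HasDerivAt (fun u => (b u).im) (deriv b (g s)).im (g s) :=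
    (Complex.imCLM.hasFDerivAt.comp_hasDerivAt _ h2)
  have k1 := h1.comp s h3
  have k4 := h4.comp s h3
  have k5 := h5.comp s h3
  rw [mul_comm] at k1 k4 k5
  exact k1.prodMk (k4.prodMk k5)

lemma shift_int {g : ℝ → ℝ} (hgp : ∀ s, g (s + 2 * π) = g s + 2 * π) (s : ℝ) (j : ℤ) :
    g (s + j * (2 * π)) = g s + j * (2 * π) := by
  have h : Function.Periodic (fun s => g s - s) (2 * π) := fun s => by
    simp only [hgp]; ring
  have := per_int h s j
  linarith

lemma slice_SI {n : ℕ} (x : Fin n → ℝ → ℝ) (w : Fin n → ℝ → ℂ) (g : Fin n → ℝ ≃ₜ ℝ)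
    (hx : ∀ i, ContDiff ℝ ∞ (x i)) (hw : ∀ i, ContDiff ℝ ∞ (w i))
    (px : ∀ i, Function.Periodic (x i) (2 * π)) (pw : ∀ i, Function.Periodic (w i) (2 * π))
    (ex : ∀ i s, x i (-s) = x i s) (ow : ∀ i s, w i (-s) = -w i s) (hG : Good x w)
    (hg : ∀ i, ContDiff ℝ ∞ (g i)) (hgp : ∀ i s, g i (s + 2 * π) = g i s + 2 * π)
    (hgd : ∀ i s, deriv (g i) s ≠ 0)
    (K : Fin n → S1 → R3) (hK : ∀ i, ContMDiff (𝓡 1) 𝓘(ℝ, R3) ∞ (K i))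
    (hKe : ∀ i s, K i (cc s) = pack (x i (g i s)) (w i (g i s))) :
    IsStronglyInvertibleLink K := by
  have hpi := Real.pi_pos
  have hfun : ∀ i, (fun s => K i (cc s)) = fun s => pack (x i (g i s)) (w i (g i s)) := fun i =>
    funext (hKe i)
  refine ⟨⟨fun i => hK i, ?_, ?_⟩, ?_⟩
  · rintro ⟨i, p⟩ ⟨k, q⟩ h
    obtain ⟨s, rfl⟩ := cc_surj p
    obtain ⟨s', rfl⟩ := cc_surj q
    simp only [hKe] at h
    obtain ⟨h1, h2⟩ := pack_inj h
    obtain ⟨rfl, j, hj⟩ := hG.1 _ _ _ _ h1 h2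
    rw [← shift_int (hgp i)] at hj
    have := (g i).injective hj
    rw [Prod.mk.injEq]
    exact ⟨rfl, (cc_eq_iff _ _).2 ⟨j, this⟩⟩
  · intro i p
    obtain ⟨s, rfl⟩ := cc_surj p
    rw [mfderiv_inj_iff _ (hK i), hfun, (pack_deriv (hx i) (hw i) (hg i) s).deriv]
    intro h
    have h0 := hgd i s
    simp only [Prod.mk_eq_zero, mul_eq_zero, h0, false_or] at h
    exact hG.2 i (g i s) h.1 (Complex.ext h.2.1 h.2.2)
  · intro i
    have hsub : ∀ y ∈ range (K i), tau y ∈ range (K i) := by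
      rintro _ ⟨p, rfl⟩
      obtain ⟨s, rfl⟩ := cc_surj p
      refine ⟨cc ((g i).symm (-(g i s))), ?_⟩
      rw [hKe, hKe]
      simp [ex, ow, pack, tau]
    have hw0 : w i 0 = 0 := by
      have := ow i 0
      rw [neg_zero] at this
      exact self_eq_neg.1 this
    have hwpi : w i π = 0 := by
      have h1 := ow i π
      have h2 := pw i (-π)
      rw [show -π + 2 * π = π by ring, h1] at h2
      exact self_eq_neg.1 h2
    have hKs : ∀ u, K i (cc ((g i).symm u)) = pack (x i u) (w i u) := by
      intro u; rw [hKe]; simp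
    refine ⟨?_, ?_⟩
    · apply Subset.antisymm
      · rintro _ ⟨y, hy, rfl⟩; exact hsub y hy
      · intro y hy
        exact ⟨tau y, hsub y hy, tau_tau y⟩
    · have hset : range (K i) ∩ xAxisSet = {pack (x i 0) (w i 0), pack (x i π) (w i π)} := by
        apply Subset.antisymm
        · rintro _ ⟨⟨p, rfl⟩, ha⟩
          obtain ⟨s, rfl⟩ := cc_surj p
          rw [hKe] at ha ⊢
          generalize g i s = u at ha ⊢
          have hwu : w i u = 0 := Complex.ext ha.1 ha.2
          obtain ⟨-, j, hj⟩ := hG.1 i i u (-u) (ex i u).symm (by rw [ow, hwu, neg_zero])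
          have hu : u = j * π := by linarith
          rcases Int.even_or_odd' j with ⟨m, rfl | rfl⟩
          · left
            have : u = 0 + m * (2 * π) := by rw [hu]; push_cast; ring
            rw [this, per_int (px i), per_int (pw i)]
          · right
            have : u = π + m * (2 * π) := by rw [hu]; push_cast; ring
            rw [this, per_int (px i), per_int (pw i)]
            rfl
        · rintro _ (rfl | rfl)
          · exact ⟨⟨_, hKs 0⟩, by simp [xAxisSet, pack, hw0]⟩
          · exact ⟨⟨_, hKs π⟩, by simp [xAxisSet, pack, hwpi]⟩
      rw [hset]
      apply Set.encard_pair
      intro h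
      obtain ⟨h1, h2⟩ := pack_inj h
      obtain ⟨-, j, hj⟩ := hG.1 _ _ _ _ h1 h2
      have h3 : ((1 + 2 * j : ℤ) : ℝ) * π = 0 := by push_cast; linarith
      have h4 : (1 + 2 * j : ℤ) = 0 := by
        rcases mul_eq_zero.1 h3 with h | h
        · exact_mod_cast h
        · exact absurd h hpi.ne'
      omega

lemma slice_Leg {n : ℕ} (x : Fin n → ℝ → ℝ) (w : Fin n → ℝ → ℂ) (g : Fin n → ℝ ≃ₜ ℝ)
    (hx : ∀ i, ContDiff ℝ ∞ (x i)) (hw : ∀ i, ContDiff ℝ ∞ (w i))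
    (hg : ∀ i, ContDiff ℝ ∞ (g i))
    (hl : ∀ i s, deriv (fun s => (w i s).im) s = (w i s).re * deriv (x i) s)
    (K : Fin n → S1 → R3) (hK : ∀ i, ContMDiff (𝓡 1) 𝓘(ℝ, R3) ∞ (K i))
    (hKe : ∀ i s, K i (cc s) = pack (x i (g i s)) (w i (g i s)))
    (i : Fin n) (p : S1) (v : EuclideanSpace ℝ (Fin 1)) :
      alphaForm (K i p) (mfderiv (𝓡 1) 𝓘(ℝ, R3) (K i) p v) = 0 := by
  obtain ⟨s, rfl⟩ := cc_surj p
  obtain ⟨a, rfl⟩ := tv_span s v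
  have hfun : (fun s => K i (cc s)) = fun s => pack (x i (g i s)) (w i (g i s)) :=
    funext (hKe i)
  have h1 := deriv_comp_cc (K i) (hK i) s
  rw [hfun, (pack_deriv (hx i) (hw i) (hg i) s).deriv] at h1
  have h2 : mfderiv (𝓡 1) 𝓘(ℝ, R3) (K i) (cc s) (a • tv s)
      = a • mfderiv (𝓡 1) 𝓘(ℝ, R3) (K i) (cc s) (tv s) := map_smul _ _ _
  have h5 : deriv (fun u => (w i u).im) (g i s) = (deriv (w i) (g i s)).im :=
    (Complex.imCLM.hasFDerivAt.comp_hasDerivAt _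
      ((hw i).differentiable (by simp) (g i s)).hasDerivAt).deriv
  have h6 := hl i (g i s)
  rw [h5] at h6
  rw [h2, ← h1, hKe]
  show a * (deriv (g i) s * (deriv (w i) (g i s)).im)
    - (w i (g i s)).re * (a * (deriv (g i) s * deriv (x i) (g i s))) = 0
  rw [h6]; ring

theorem main_aux {n : ℕ}
    (L₀ : Fin n → S1 → R3) (hL₀ : IsStronglyInvertibleLink L₀) :
    ∃ H : Fin n → ℝ × S1 → R3,
      (∀ i, ContMDiff ((𝓘(ℝ, ℝ)).prod (𝓡 1)) 𝓘(ℝ, R3) (⊤ : ℕ∞) (H i)) ∧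
      (∀ i s, H i (0, s) = L₀ i s) ∧
      (∀ t ∈ Set.Icc (0 : ℝ) 1, IsStronglyInvertibleLink fun i s => H i (t, s)) ∧
      IsStronglyInvertibleLegendrianLink fun i s => H i (1, s) := by
  obtain ⟨⟨hsm, hinj, himm⟩, hsi⟩ := hL₀
  have hinji : ∀ i, Function.Injective (L₀ i) := fun i p q h => by
    have := @hinj (i, p) (i, q) h
    exact (Prod.mk.inj this).2
  choose g hg hgs hgp hgd hgsd hgt using fun i =>
    normalize_comp (L₀ i) (hsm i) (hinji i) (himm i) (hsi i).1 (hsi i).2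
  have hgsp : ∀ i s, (g i).symm (s + 2 * π) = (g i).symm s + 2 * π := fun i s => by
    apply (g i).injective
    rw [hgp]; simp
  set M : Fin n → ℝ → R3 := fun i u => L₀ i (cc ((g i).symm u)) with hM
  set x : Fin n → ℝ → ℝ := fun i u => (M i u).1 with hxd
  set w : Fin n → ℝ → ℂ := fun i u => ⟨(M i u).2.1, (M i u).2.2⟩ with hwd
  have hγ : ∀ i, ContDiff ℝ ∞ (fun s => L₀ i (cc s)) := fun i =>
    contMDiff_iff_contDiff.1 ((hsm i).comp cc_contMDiff)
  have hMs : ∀ i, ContDiff ℝ ∞ (M i) := fun i => (hγ i).comp (hgs i)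
  have hx : ∀ i, ContDiff ℝ ∞ (x i) := fun i => contDiff_fst.comp (hMs i)
  have hw : ∀ i, ContDiff ℝ ∞ (w i) := fun i => by
    have h1 : ContDiff ℝ ∞ fun u => (M i u).2.1 := (contDiff_fst.comp contDiff_snd).comp (hMs i)
    have h2 : ContDiff ℝ ∞ fun u => (M i u).2.2 := (contDiff_snd.comp contDiff_snd).comp (hMs i)
    exact Complex.equivRealProdCLM.symm.contDiff.comp (h1.prodMk h2)
  have pM : ∀ i s, M i (s + 2 * π) = M i s := fun i s => by
    simp only [hM]
    congr 1
    rw [hgsp]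
    exact (cc_eq_iff _ _).2 ⟨1, by simp⟩
  have pack_M : ∀ i u, pack (x i u) (w i u) = M i u := fun i u => rfl
  have hMd : ∀ i u, deriv (M i) u ≠ 0 := by
    intro i u
    have h1 : HasDerivAt (M i) (deriv (g i).symm u • deriv (fun s => L₀ i (cc s)) ((g i).symm u)) u :=
      HasDerivAt.scomp u ((hγ i).differentiable (by simp) _).hasDerivAt
        ((hgs i).differentiable (by simp) u).hasDerivAt
    rw [h1.deriv]
    exact smul_ne_zero (hgsd i u) ((mfderiv_inj_iff _ (hsm i) _).1 (himm i _))
  have hG : Good x w := by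
    constructor
    · intro i k s s' h1 h2
      have h3 : M i s = M k s' := by rw [← pack_M, ← pack_M, h1, h2]
      have h4 := @hinj (i, cc ((g i).symm s)) (k, cc ((g k).symm s')) h3
      obtain ⟨rfl, h5⟩ := Prod.mk.inj h4
      obtain ⟨j, hj⟩ := (cc_eq_iff _ _).1 h5
      refine ⟨rfl, j, ?_⟩
      rw [← shift_int (hgsp i)] at hj
      exact (g i).symm.injective hj
    · intro i s h1 h2
      have h3 := (pack_deriv (hx i) (hw i) contDiff_id s).deriv
      simp only [id, h1, h2] at h3
      apply hMd i s
      have h4 : (fun s => pack (x i s) (w i s)) = M i := rfl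
      rw [h4] at h3
      rw [h3]
      simp
  obtain ⟨X, W, hX, hW, pX, pW, eX, oW, X0, W0, hGt, hleg⟩ := core x w hx hw
    (fun i s => by simp only [hxd, pM]) (fun i s => by simp only [hwd, pM])
    (fun i s => by simp only [hxd, hM, hgt, tau])
    (fun i s => by
      simp only [hwd, hM, hgt, tau]
      apply Complex.ext <;> simp) hG
  have hfs : ∀ i, ContDiff ℝ ∞ (fun q : ℝ × ℝ => pack (X i (q.1, g i q.2)) (W i (q.1, g i q.2))) := by
    intro i
    have h0 : ContDiff ℝ ∞ (fun q : ℝ × ℝ => (q.1, g i q.2)) :=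
      contDiff_fst.prodMk ((hg i).comp contDiff_snd)
    have h1 := (hX i).comp h0
    have h2 := (hW i).comp h0
    exact h1.prodMk ((Complex.reCLM.contDiff.comp h2).prodMk (Complex.imCLM.contDiff.comp h2))
  choose H hH hHe using fun i => descend _ (hfs i) (fun t s => by simp only [hgp, pX, pW])
  have hsl : ∀ t i, ContDiff ℝ ∞ fun s => X i (t, s) := fun t i =>
    (hX i).comp (contDiff_const.prodMk contDiff_id)
  have hslw : ∀ t i, ContDiff ℝ ∞ fun s => W i (t, s) := fun t i =>
    (hW i).comp (contDiff_const.prodMk contDiff_id)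
  have hKs : ∀ t i, ContMDiff (𝓡 1) 𝓘(ℝ, R3) ∞ (fun s => H i (t, s)) := fun t i =>
    (hH i).comp (contMDiff_const.prodMk contMDiff_id)
  have hSI : ∀ t ∈ Set.Icc (0 : ℝ) 1, IsStronglyInvertibleLink fun i s => H i (t, s) := fun t ht =>
    slice_SI (fun i s => X i (t, s)) (fun i s => W i (t, s)) g (hsl t) (hslw t)
      (fun i s => pX i t s) (fun i s => pW i t s) (fun i s => eX i t s) (fun i s => oW i t s)
      (hGt t ht) hg hgp hgd _ (hKs t) (fun i s => hHe i t s)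
  refine ⟨H, hH, ?_, hSI, hSI 1 (by simp), (hSI 1 (by simp)).1, ?_⟩
  · intro i p
    obtain ⟨s, rfl⟩ := cc_surj p
    rw [hHe]
    simp only [X0, W0, pack_M, hM, Homeomorph.symm_apply_apply]
  · exact slice_Leg (fun i s => X i (1, s)) (fun i s => W i (1, s)) g (hsl 1) (hslw 1) hg hleg
      (fun i s => H i (1, s)) (hKs 1) (fun i s => hHe i 1 s)

end LegendrianProof

/-- Every strongly invertible link in ℝ³ is equivalent, through a smooth family of strongly
invertible links, to a strongly invertible Legendrian link: there is a smooth map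
H : ℝ × (Fin n × 𝕊¹) → ℝ³ with H(0,·) = L₀, with H(t,·) a strongly invertible link for every
t ∈ [0,1], and with H(1,·) a strongly invertible Legendrian link. -/
theorem exists_strongly_invertible_legendrian_representative {n : ℕ}
    (L₀ : Fin n → S1 → R3) (hL₀ : IsStronglyInvertibleLink L₀) :
    ∃ H : Fin n → ℝ × S1 → R3,
      (∀ i, ContMDiff ((𝓘(ℝ, ℝ)).prod (𝓡 1)) 𝓘(ℝ, R3) (⊤ : ℕ∞) (H i)) ∧
      (∀ i s, H i (0, s) = L₀ i s) ∧
      (∀ t ∈ Set.Icc (0 : ℝ) 1, IsStronglyInvertibleLink fun i s => H i (t, s)) ∧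
      IsStronglyInvertibleLegendrianLink fun i s => H i (1, s) := by
  exact main_aux L₀ hL₀
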